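/- arXiv:2310.00292 — 4 statements merged into one kernel-verified Lean document; each statement's English description precedes it below -/
import Mathlib

section
/- Let μ = f·Lⁿ ∈ 𝒲(ℝⁿ) be a PS measure with f continuous and f > 0 everywhere, and let a ∈ ℝⁿ. Then the translated measure ν := f̃·Lⁿ with f̃(x) := f(x + a) is also a PS measure. Moreover, if f(x₁,…,x_n) = f₁(x₁)⋯f_n(x_n) with each f_i continuous and f_i > 0, then there exists m ∈ ℝⁿ such that ν := f̃·Lⁿ with f̃(x) = f(x + m) is a PS measure and f̃(x₁,…,x_n) = f̃₁(x₁)⋯f̃_n(x_n) with each f̃_i continuous, strictly positive, and even: f̃_i(−t) = f̃_i(t) for all t ∈ ℝ and all i = 1,…,n. -/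
/-!
Translations preserve Lebesgue measure, so the weighted perimeter and the fiberwise symmetrization
are equivariant under them (`perim_translate`, `ehrhardSymm_translate`); hence every translate of a
PS measure is a PS measure.

For a product density, evenness of the factors about suitable centers comes from comparing
half-spaces. Symmetrizing `{x | x i ≥ c}` in direction `-e_i` produces `{x | x i ≤ c'}`, where
`c'` cuts off from `F i` a lower tail of the same mass as the upper tail at `c`
(`ehrhardSymm_coordHalf`). The weighted perimeter of either half-space is the value of `F i` at the
boundary point times the product of the integrals of the remaining factors (`perim_coordHalf_le`,
`le_perim_coordHalf`). This is obtained by testing the weak gradient against fields multiplied by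
smooth ramps in `x i`, whose derivatives concentrate on the boundary hyperplane. The PS inequality
thus gives `F i c' ≤ F i c`, and since `c ↦ c'` is an involution, `F i c' = F i c`.
Differentiating the equality of tails shows that this involution has derivative `-1`, so it is a
reflection `c ↦ 2 m - c` leaving `F i` invariant (`exists_symm_of_balanced`). Translating by the
vector of these centers `m` makes all factors even.
-/

open MeasureTheory Set Filter
open scoped ENNReal RealInnerProductSpace Topology

noncomputable section

/-- Euclidean space ℝⁿ. -/
abbrev En (n : ℕ) := EuclideanSpace ℝ (Fin n)

/-- Divergence of a vector field on ℝⁿ. -/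
noncomputable def dvg {n : ℕ} (φ : En n → En n) (x : En n) : ℝ :=
  ∑ i : Fin n, fderiv ℝ φ x (EuclideanSpace.single i 1) i

/-- `f'` is the (weak) gradient of `f`, and both are locally integrable;
this encodes `f ∈ W^{1,1}_loc(ℝⁿ)` with weak gradient `∇f = f'`. -/
def HasWeakGrad {n : ℕ} (f : En n → ℝ) (f' : En n → En n) : Prop :=
  LocallyIntegrable f volume ∧ LocallyIntegrable f' volume ∧
    ∀ φ : En n → En n, ContDiff ℝ 1 φ → HasCompactSupport φ →
      (∫ x, f x * dvg φ x) = - ∫ x, ⟪φ x, f' x⟫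

/-- Membership of `μ = f·Lⁿ` in the class `𝒲(ℝⁿ)`: the density `f` is non-negative,
integrable and lies in `W^{1,1}_loc(ℝⁿ)` with weak gradient `f'`. -/
def MemW {n : ℕ} (f : En n → ℝ) (f' : En n → En n) : Prop :=
  (∀ x, 0 ≤ f x) ∧ Integrable f volume ∧ HasWeakGrad f f'

/-- Admissible test vector fields: `C¹`, compactly supported in `U`, sup-norm at most 1. -/
def IsTestField {n : ℕ} (U : Set (En n)) (φ : En n → En n) : Prop :=
  ContDiff ℝ 1 φ ∧ HasCompactSupport φ ∧ tsupport φ ⊆ U ∧ ∀ x, ‖φ x‖ ≤ 1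

/-- The weighted variation `‖g‖_{BV_μ(U)}` (valued in `ℝ≥0∞`;
membership in `BV_μ(U)` means that this quantity is finite). -/
noncomputable def bvVar {n : ℕ} (f : En n → ℝ) (f' : En n → En n) (U : Set (En n))
    (g : En n → ℝ) : ℝ≥0∞ :=
  ⨆ (φ : En n → En n) (_ : IsTestField U φ),
    ENNReal.ofReal (∫ x in U, g x * (f x * dvg φ x + ⟪φ x, f' x⟫))

/-- The weighted perimeter `Per_μ(E; U)`. -/
noncomputable def perim {n : ℕ} (f : En n → ℝ) (f' : En n → En n) (U : Set (En n))
    (E : Set (En n)) : ℝ≥0∞ :=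
  bvVar f f' U (E.indicator fun _ => (1 : ℝ))

/-- The measure `μ = f·Lⁿ`. -/
noncomputable def muM {n : ℕ} (f : En n → ℝ) : Measure (En n) :=
  volume.withDensity fun x => ENNReal.ofReal (f x)

/-- One-dimensional generalized Ehrhard symmetrization of `A ⊆ ℝ` in direction `v ∈ {−1,+1}`
with respect to a measure `ν` on `ℝ`: the largest half-line `{t : v·t ≥ c}` of `ν`-measure
`ν A` (with the conventions `∅`, `ℝ` when `c = ±∞`). -/
def ehrhard1D (ν : Measure ℝ) (v : ℝ) (A : Set ℝ) : Set ℝ :=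
  {t | ∀ b : ℝ, (∀ c : ℝ, ν {y | c ≤ v * y} ≤ ν A → b ≤ c) → b ≤ v * t}

/-- The weighted measure `f·H¹` on the fiber `{x + t·v : t ∈ ℝ}`, identified with `ℝ`. -/
noncomputable def fiberMeasure {n : ℕ} (f : En n → ℝ) (x v : En n) : Measure ℝ :=
  (volume : Measure ℝ).withDensity fun t => ENNReal.ofReal (f (x + t • v))

/-- Generalized `v`-Ehrhard symmetrization of `E ⊆ ℝⁿ` with respect to `μ = f·Lⁿ`:
on each fiber over `v^⊥` one replaces `E` by the largest half-line in direction `v`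
of the same weighted measure. -/
def ehrhardSymm {n : ℕ} (f : En n → ℝ) (v : En n) (E : Set (En n)) : Set (En n) :=
  {z | ⟪z, v⟫ ∈
      ehrhard1D (fiberMeasure f (z - ⟪z, v⟫ • v) v) 1
        {t | (z - ⟪z, v⟫ • v) + t • v ∈ E}}

/-- `μ = f·Lⁿ` is a perimeter symmetrization (PS) measure: generalized Ehrhard
symmetrization does not increase the weighted perimeter of sets of finite `μ`-perimeter. -/
def IsPSMeasure {n : ℕ} (f : En n → ℝ) (f' : En n → En n) : Prop :=
  ∀ v : En n, ‖v‖ = 1 → ∀ E : Set (En n), NullMeasurableSet E volume →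
    perim f f' univ E < ⊤ →
      perim f f' univ (ehrhardSymm f v E) ≤ perim f f' univ E

/-- The half-space `H(v, r) = {x : x·v ≥ r}`. -/
def halfSpace {n : ℕ} (v : En n) (r : ℝ) : Set (En n) := {x | r ≤ ⟪x, v⟫}

/-- `H_μ(E, v)`: the largest half-space in direction `v` with `μ`-measure `μ(E)`. -/
def halfSpaceOf {n : ℕ} (f : En n → ℝ) (E : Set (En n)) (v : En n) : Set (En n) :=
  {x | ∀ b : ℝ, (∀ c : ℝ, muM f (halfSpace v c) ≤ muM f E → b ≤ c) → b ≤ ⟪x, v⟫}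

/-- `g'` is the weak derivative of `g : ℝ → ℝ` (so `g ∈ W^{1,1}_loc(ℝ)`). -/
def HasWeakDeriv (g g' : ℝ → ℝ) : Prop :=
  LocallyIntegrable g volume ∧ LocallyIntegrable g' volume ∧
    ∀ φ : ℝ → ℝ, ContDiff ℝ 1 φ → HasCompactSupport φ →
      (∫ t, g t * deriv φ t) = - ∫ t, φ t * g' t

/-! ### Invariance under translations -/

lemma dvg_comp_sub {n : ℕ} (φ : En n → En n) (a x : En n) :
    dvg (fun y => φ (y - a)) x = dvg φ (x - a) := by
  simp only [dvg, fderiv_comp_sub]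

lemma bvVar_translate_le {n : ℕ} (f : En n → ℝ) (f' : En n → En n) (g : En n → ℝ) (a : En n) :
    bvVar (fun x => f (x + a)) (fun x => f' (x + a)) univ (fun x => g (x + a)) ≤
      bvVar f f' univ g := by
  refine iSup₂_le fun φ hφ => ?_
  have hψ : IsTestField univ (fun y => φ (y - a)) := by
    obtain ⟨h1, h2, -, h4⟩ := hφ
    refine ⟨h1.comp (contDiff_id.sub contDiff_const), ?_, subset_univ _, fun x => h4 _⟩
    exact h2.comp_homeomorph (Homeomorph.subRight a)
  refine le_trans (le_of_eq ?_) (le_iSup₂ (f := fun (φ : En n → En n) (_ : IsTestField univ φ) =>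
    ENNReal.ofReal (∫ x in univ, g x * (f x * dvg φ x + ⟪φ x, f' x⟫))) _ hψ)
  simp only [Measure.restrict_univ, dvg_comp_sub]
  congr 1
  conv_rhs => rw [← integral_add_right_eq_self _ a]
  simp only [add_sub_cancel_right]

lemma bvVar_translate {n : ℕ} (f : En n → ℝ) (f' : En n → En n) (g : En n → ℝ) (a : En n) :
    bvVar (fun x => f (x + a)) (fun x => f' (x + a)) univ (fun x => g (x + a)) =
      bvVar f f' univ g := by
  refine le_antisymm (bvVar_translate_le f f' g a) ?_
  simpa using bvVar_translate_le (fun x => f (x + a)) (fun x => f' (x + a))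
    (fun x => g (x + a)) (-a)

lemma perim_translate {n : ℕ} (f : En n → ℝ) (f' : En n → En n) (E : Set (En n)) (a : En n) :
    perim (fun x => f (x + a)) (fun x => f' (x + a)) univ ((fun x => x + a) ⁻¹' E) =
      perim f f' univ E :=
  bvVar_translate f f' (E.indicator fun _ => (1 : ℝ)) a

/-- One-dimensional symmetrization commutes with the translation `t ↦ t + τ`. -/
lemma ehrhard1D_translate (ν ν' : Measure ℝ) (τ t : ℝ) (A A' : Set ℝ)
    (hν : ∀ B : Set ℝ, ν ((fun y => y + τ) ⁻¹' B) = ν' B) (hA : (fun y => y + τ) ⁻¹' A' = A) :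
    t ∈ ehrhard1D ν 1 A ↔ t + τ ∈ ehrhard1D ν' 1 A' := by
  have key : ∀ c : ℝ, ν {y | c ≤ 1 * y} = ν' {y | c + τ ≤ 1 * y} := by
    intro c
    rw [← hν]
    simp
  have hAA : ν A = ν' A' := by rw [← hν, hA]
  simp only [ehrhard1D, mem_ofPred_eq, key, hAA]
  simp only [one_mul]
  constructor
  · intro h b hb
    have := h (b - τ) fun c hc => by linarith [hb (c + τ) hc]
    linarith
  · intro h b hb
    have := h (b + τ) fun c hc => by
      have := hb (c - τ) (by simpa only [sub_add_cancel, one_mul] using hc)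
      linarith
    linarith

/-- The identity holds for arbitrary, possibly non-measurable, `B`: fibers of null measurable
sets need not be measurable. -/
lemma fiberMeasure_translate {n : ℕ} (f : En n → ℝ) (x x' v a : En n) (τ : ℝ)
    (hx : x + a = x' + τ • v) (B : Set ℝ) :
    fiberMeasure (fun y => f (y + a)) x v ((fun y => y + τ) ⁻¹' B) = fiberMeasure f x' v B := by
  have hm : Measure.map (MeasurableEquiv.addRight τ) (fiberMeasure (fun y => f (y + a)) x v)
      = fiberMeasure f x' v := by
    ext S hS
    rw [MeasurableEquiv.map_apply, fiberMeasure, fiberMeasure,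
      withDensity_apply _ ((MeasurableEquiv.addRight τ).measurable hS), withDensity_apply _ hS,
      ← lintegral_indicator ((MeasurableEquiv.addRight τ).measurable hS), ← lintegral_indicator hS,
      ← lintegral_add_right_eq_self (S.indicator _) τ]
    congr 1
    ext t
    have : x + t • v + a = x' + (t + τ) • v := by
      rw [add_smul, add_right_comm, hx]; abel
    simp only [indicator, this]
    rfl
  rw [← hm, MeasurableEquiv.map_apply]
  rfl

lemma ehrhardSymm_translate {n : ℕ} (f : En n → ℝ) (v a : En n) (E : Set (En n)) :
    ehrhardSymm (fun x => f (x + a)) v ((fun x => x + a) ⁻¹' E) =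
      (fun x => x + a) ⁻¹' ehrhardSymm f v E := by
  ext z
  simp only [ehrhardSymm, mem_ofPred_eq, mem_preimage, inner_add_left]
  have hx : z - ⟪z, v⟫ • v + a = z + a - (⟪z, v⟫ + ⟪a, v⟫) • v + ⟪a, v⟫ • v := by
    module
  refine ehrhard1D_translate _ _ ⟪a, v⟫ _ _ _ (fiberMeasure_translate f _ _ v a _ hx) ?_
  ext t
  have : z - ⟪z, v⟫ • v + t • v + a
      = z + a - (⟪z, v⟫ + ⟪a, v⟫) • v + (t + ⟪a, v⟫) • v := by module
  simp [this]

lemma IsPSMeasure.translate {n : ℕ} {f : En n → ℝ} {f' : En n → En n}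
    (hPS : IsPSMeasure f f') (a : En n) :
    IsPSMeasure (fun x => f (x + a)) (fun x => f' (x + a)) := by
  intro v hv E hE hfin
  set Es : Set (En n) := (fun x => x + -a) ⁻¹' E with hEs
  have hEE : E = (fun x => x + a) ⁻¹' Es := by ext; simp [hEs]
  have hEm : NullMeasurableSet Es volume :=
    hE.preimage (measurePreserving_add_right volume (-a)).quasiMeasurePreserving
  rw [hEE, perim_translate] at hfin
  rw [hEE, ehrhardSymm_translate, perim_translate, perim_translate]
  exact hPS v hv Es hEm hfin

/-! ### Balanced densities on the line -/

section Line

variable {g : ℝ → ℝ}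

lemma hasDerivAt_integral_Iic (hg : Continuous g) (hi : Integrable g) (x : ℝ) :
    HasDerivAt (fun t => ∫ y in Iic t, g y) (g x) x := by
  have h1 : (fun t => ∫ y in Iic t, g y) = fun t => (∫ y in (0:ℝ)..t, g y) + ∫ y in Iic 0, g y := by
    ext t
    rw [← intervalIntegral.integral_Iic_sub_Iic hi.integrableOn hi.integrableOn]
    ring
  rw [h1]
  exact (intervalIntegral.integral_hasDerivAt_right (hg.intervalIntegrable _ _)
    (hg.stronglyMeasurableAtFilter _ _) hg.continuousAt).add_const _

lemma strictMono_integral_Iic (hg : Continuous g) (hi : Integrable g) (hp : ∀ t, 0 < g t) :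
    StrictMono (fun t => ∫ y in Iic t, g y) :=
  strictMono_of_hasDerivAt_pos (fun x => hasDerivAt_integral_Iic hg hi x) hp

lemma integral_Iic_add_Ioi (hi : Integrable g) (c : ℝ) :
    (∫ y in Iic c, g y) + ∫ y in Ioi c, g y = ∫ y, g y := by
  rw [← compl_Iic]
  exact integral_add_compl measurableSet_Iic hi

/-- The upper tail at `c` equals the lower tail at some `c'`. -/
lemma exists_tail_eq (hg : Continuous g) (hi : Integrable g) (hp : ∀ t, 0 < g t) (c : ℝ) :
    ∃ c', ∫ y in Iic c', g y = ∫ y in Ioi c, g y := by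
  have hmono := strictMono_integral_Iic hg hi hp
  have hcont : Continuous fun t => ∫ y in Iic t, g y :=
    continuous_iff_continuousAt.2 fun x => (hasDerivAt_integral_Iic hg hi x).continuousAt
  have htop : Tendsto (fun t => ∫ y in Iic t, g y) atTop (𝓝 (∫ y, g y)) := by
    have := tendsto_setIntegral_of_monotone (μ := volume) (f := g) (s := fun t : ℝ => Iic t)
      (fun t => measurableSet_Iic) (fun a b h => Iic_subset_Iic.2 h) hi.integrableOn
    rwa [iUnion_Iic, setIntegral_univ] at this
  have hbot : Tendsto (fun t => ∫ y in Iic t, g y) atBot (𝓝 0) := by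
    have h2 : (fun t => ∫ y in Iic t, g y) =
        fun t => (∫ y in Iic (0:ℝ), g y) - ∫ y in t..0, g y := by
      ext t
      rw [← intervalIntegral.integral_Iic_sub_Iic hi.integrableOn hi.integrableOn]
      ring
    rw [h2]
    have := (intervalIntegral_tendsto_integral_Iic (0:ℝ) hi.integrableOn
      tendsto_id).const_sub (∫ y in Iic (0:ℝ), g y)
    simpa using this
  have hsum := integral_Iic_add_Ioi hi c
  have h0 : 0 < ∫ y in Ioi c, g y := by
    have : (∫ y in Iic c, g y) < ∫ y in Iic (c + 1), g y := hmono (by linarith)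
    have h3 : (∫ y in Iic (c + 1), g y) ≤ ∫ y, g y :=
      setIntegral_le_integral hi (Eventually.of_forall fun x => (hp x).le)
    linarith
  have h1 : 0 < ∫ y in Iic c, g y := by
    have h4 : 0 ≤ ∫ y in Iic (c - 1), g y := integral_nonneg fun x => (hp x).le
    have : (∫ y in Iic (c - 1), g y) < ∫ y in Iic c, g y := hmono (by linarith)
    linarith
  obtain ⟨x, hx⟩ := (hbot.eventually (gt_mem_nhds h0)).exists
  obtain ⟨y, hy⟩ := (htop.eventually (lt_mem_nhds (show (∫ y in Ioi c, g y) < _ by linarith))).exists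
  exact mem_range_of_exists_le_of_exists_ge hcont ⟨x, hx.le⟩ ⟨y, hy.le⟩

/-- If the density does not increase on passing from a point to the point cutting off the same
mass from the opposite end, then the density is symmetric about its median: the map exchanging
two such points is an involution with derivative `-1`. -/
lemma exists_symm_of_balanced (hg : Continuous g) (hi : Integrable g) (hp : ∀ t, 0 < g t)
    (H : ∀ c c', ∫ y in Iic c', g y = ∫ y in Ioi c, g y → g c' ≤ g c) :
    ∃ m, ∀ t, g (-t + m) = g (t + m) := by
  choose σ hσ using exists_tail_eq hg hi hp
  set Φ : ℝ → ℝ := fun t => ∫ y in Iic t, g y with hΦ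
  have hmono : StrictMono Φ := strictMono_integral_Iic hg hi hp
  have hσ' : ∀ c, Φ (σ c) = (∫ y, g y) - Φ c := fun c => by
    have := integral_Iic_add_Ioi hi c
    simp only [hΦ, hσ]; linarith
  have hinv : ∀ c, σ (σ c) = c := fun c => hmono.injective (by rw [hσ', hσ']; ring)
  have hgσ : ∀ c, g (σ c) = g c := fun c => by
    refine le_antisymm (H _ _ (hσ c)) ?_
    have := H _ _ (hσ (σ c))
    rwa [hinv] at this
  have hanti : Antitone σ := fun x y hxy => by
    rw [← hmono.le_iff_le, hσ', hσ']
    linarith [hmono.monotone hxy]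
  have hcont : Continuous σ := by
    have h : Continuous fun x => -σ x := by
      refine Monotone.continuous_of_surjective (fun x y hxy => neg_le_neg (hanti hxy)) fun y => ?_
      exact ⟨σ (-y), by simp [hinv]⟩
    exact continuous_neg_iff.1 h
  have hder : ∀ c, HasDerivAt σ (-1) c := fun c => by
    have h := HasDerivAt.of_comp_left (f := Φ) (g := σ) (h := fun c => (∫ y, g y) - Φ c)
      hcont.continuousAt (hasDerivAt_integral_Iic hg hi (σ c))
      ((hasDerivAt_integral_Iic hg hi c).const_sub _) (hp _).ne'
      (Eventually.of_forall hσ')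
    rwa [hgσ, neg_div, div_self (hp c).ne'] at h
  have hconst : ∀ x y, σ x + x = σ y + y := by
    refine is_const_of_deriv_eq_zero (f := fun x => σ x + x)
      (fun x => ((hder x).add (hasDerivAt_id x)).differentiableAt) fun x => ?_
    exact ((hder x).add (hasDerivAt_id x)).deriv.trans (by norm_num)
  refine ⟨σ 0 / 2, fun t => ?_⟩
  have := hconst (t + σ 0 / 2) 0
  rw [← hgσ (t + σ 0 / 2)]
  congr 1
  linarith

end Line

/-! ### Products of one-dimensional densities -/

lemma integral_prod_coord {n : ℕ} (G : Fin n → ℝ → ℝ) :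
    ∫ x : En n, ∏ j, G j (x j) = ∏ j, ∫ t, G j t := by
  rw [← integral_fintype_prod_volume_eq_prod]
  exact (PiLp.volume_preserving_ofLp (Fin n)).integral_comp
    (MeasurableEquiv.toLp 2 (Fin n → ℝ)).symm.measurableEmbedding (fun y => ∏ j, G j (y j))

lemma integrable_prod_coord {n : ℕ} {G : Fin n → ℝ → ℝ} (hG : ∀ j, Integrable (G j)) :
    Integrable fun x : En n => ∏ j, G j (x j) :=
  ((PiLp.volume_preserving_ofLp (Fin n)).integrable_comp_emb
    (MeasurableEquiv.toLp 2 (Fin n → ℝ)).symm.measurableEmbedding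
    (g := fun y => ∏ j, G j (y j))).2 (Integrable.fintype_prod hG)

/-- In particular each factor is integrable, the integral of a non-integrable function being `0`. -/
lemma integral_factor_pos {n : ℕ} {f : En n → ℝ} (hi : Integrable f)
    (hpos : ∀ x, 0 < f x) {F : Fin n → ℝ → ℝ} (hF : ∀ i t, 0 < F i t)
    (hfF : ∀ x : En n, f x = ∏ i, F i (x i)) (j : Fin n) : 0 < ∫ t, F j t := by
  have h : 0 < ∫ x, f x := by
    rw [integral_pos_iff_support_of_nonneg (fun x => (hpos x).le) hi,
      show Function.support f = univ from eq_univ_of_forall fun x => (hpos x).ne']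
    exact isOpen_univ.measure_pos volume univ_nonempty
  simp only [hfF, integral_prod_coord] at h
  exact lt_of_le_of_ne (integral_nonneg fun t => (hF j t).le)
    (Finset.prod_ne_zero_iff.1 h.ne' j (Finset.mem_univ j)).symm

/-- Multiplying the product density by a function of `x i` only changes the `i`-th factor. -/
lemma mul_prod_eq_update {n : ℕ} (F : Fin n → ℝ → ℝ) (i : Fin n) (ρ : ℝ → ℝ) (x : En n) :
    ρ (x i) * ∏ j, F j (x j) = ∏ j, Function.update F i (fun t => ρ t * F i t) j (x j) := by
  rw [← Finset.mul_prod_erase _ _ (Finset.mem_univ i),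
    ← Finset.mul_prod_erase _ (fun j => Function.update F i (fun t => ρ t * F i t) j (x j))
      (Finset.mem_univ i), Function.update_self, ← mul_assoc]
  congr 1
  refine Finset.prod_congr rfl fun j hj => ?_
  rw [Function.update_of_ne (Finset.ne_of_mem_erase hj)]

lemma integral_mul_prod {n : ℕ} (F : Fin n → ℝ → ℝ) (i : Fin n) (ρ : ℝ → ℝ) :
    ∫ x : En n, ρ (x i) * ∏ j, F j (x j) =
      (∫ t, ρ t * F i t) * ∏ j ∈ Finset.univ.erase i, ∫ t, F j t := by
  simp only [mul_prod_eq_update]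
  rw [integral_prod_coord, ← Finset.mul_prod_erase _ _ (Finset.mem_univ i), Function.update_self]
  congr 1
  refine Finset.prod_congr rfl fun j hj => ?_
  rw [Function.update_of_ne (Finset.ne_of_mem_erase hj)]

lemma integrable_mul_prod {n : ℕ} {F : Fin n → ℝ → ℝ} (hF : ∀ j, Integrable (F j)) (i : Fin n)
    {ρ : ℝ → ℝ} (hρ : Integrable fun t => ρ t * F i t) :
    Integrable fun x : En n => ρ (x i) * ∏ j, F j (x j) := by
  simp only [mul_prod_eq_update]
  refine integrable_prod_coord fun j => ?_
  by_cases hj : j = i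
  · subst hj; simpa using hρ
  · rw [Function.update_of_ne hj]; exact hF j

/-! ### A smooth approximation of half-lines -/

lemma deriv_smoothTransition_continuous : Continuous (deriv Real.smoothTransition) :=
  (Real.smoothTransition.contDiff (n := 1)).continuous_deriv le_rfl

lemma deriv_smoothTransition_nonneg (t : ℝ) : 0 ≤ deriv Real.smoothTransition t :=
  Real.smoothTransition.monotone.deriv_nonneg

lemma deriv_smoothTransition_eq_zero {t : ℝ} (ht : t ∉ Icc (0 : ℝ) 1) :
    deriv Real.smoothTransition t = 0 := by
  rcases lt_or_ge t 0 with h | h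
  · have : Real.smoothTransition =ᶠ[𝓝 t] fun _ => 0 := by
      filter_upwards [gt_mem_nhds h] with x hx using Real.smoothTransition.zero_of_nonpos hx.le
    rw [this.deriv_eq]; simp
  · have h1 : 1 < t := by
      by_contra h1
      exact ht ⟨h, not_lt.1 h1⟩
    have : Real.smoothTransition =ᶠ[𝓝 t] fun _ => 1 := by
      filter_upwards [lt_mem_nhds h1] with x hx using Real.smoothTransition.one_of_one_le hx.le
    rw [this.deriv_eq]; simp

lemma deriv_smoothTransition_compactSupport : HasCompactSupport (deriv Real.smoothTransition) :=
  HasCompactSupport.intro isCompact_Icc fun _ hx => deriv_smoothTransition_eq_zero hx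

lemma integral_deriv_smoothTransition : ∫ t, deriv Real.smoothTransition t = 1 := by
  have h := integral_of_hasDerivAt_of_tendsto (f := Real.smoothTransition)
    (f' := deriv Real.smoothTransition) (m := 0) (n := 1)
    (fun x => ((Real.smoothTransition.contDiff (n := 1)).differentiable (by norm_num) x).hasDerivAt)
    (deriv_smoothTransition_continuous.integrable_of_hasCompactSupport
      deriv_smoothTransition_compactSupport)
    (tendsto_const_nhds.congr' (by
      filter_upwards [eventually_le_atBot (0 : ℝ)] with x hx
      exact (Real.smoothTransition.zero_of_nonpos hx).symm))
    (tendsto_const_nhds.congr' (by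
      filter_upwards [eventually_ge_atTop (1 : ℝ)] with x hx
      exact (Real.smoothTransition.one_of_one_le hx).symm))
  simpa using h

/-- A smooth function of `t` decreasing (as `0 ≤ κ → ∞`) to the indicator of the closed half-line
`{t | 0 ≤ s * (t - c)}`, for a sign `s`. It equals `1` on the half-line itself, so that the
convergence holds at every point. -/
def ramp (s c κ t : ℝ) : ℝ := Real.smoothTransition (1 + κ * (s * (t - c)))

/-- The derivative of `ramp`, up to the sign `s`: a nonnegative kernel concentrating at `c`. -/
def peak (s c κ t : ℝ) : ℝ := κ * deriv Real.smoothTransition (1 + κ * (s * (t - c)))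

lemma ramp_contDiff (s c κ : ℝ) : ContDiff ℝ 1 (ramp s c κ) :=
  (Real.smoothTransition.contDiff (n := 1)).comp (by fun_prop)

lemma deriv_ramp (s c κ t : ℝ) : deriv (ramp s c κ) t = s * peak s c κ t := by
  have h1 : HasDerivAt (fun t => 1 + κ * (s * (t - c))) (κ * (s * 1)) t :=
    ((((hasDerivAt_id t).sub_const c).const_mul s).const_mul κ).const_add 1
  have h2 := ((Real.smoothTransition.contDiff (n := 1)).differentiable (by norm_num)
    (1 + κ * (s * (t - c)))).hasDerivAt
  have h3 : HasDerivAt (ramp s c κ) _ t := h2.comp t h1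
  rw [h3.deriv, peak]; ring

lemma peak_continuous (s c κ : ℝ) : Continuous (peak s c κ) :=
  continuous_const.mul (deriv_smoothTransition_continuous.comp (by fun_prop))

lemma peak_nonneg (s c t : ℝ) {κ : ℝ} (hκ : 0 ≤ κ) : 0 ≤ peak s c κ t :=
  mul_nonneg hκ (deriv_smoothTransition_nonneg _)

lemma integrable_peak_mul (s c κ : ℝ) {g : ℝ → ℝ} (hi : Integrable g) :
    Integrable fun t => peak s c κ t * g t := by
  obtain ⟨B, hB⟩ := deriv_smoothTransition_compactSupport.exists_bound_of_continuous
    deriv_smoothTransition_continuous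
  refine hi.bdd_mul (c := |κ| * B) (peak_continuous s c κ).aestronglyMeasurable
    (Eventually.of_forall fun t => ?_)
  rw [peak, norm_mul, Real.norm_eq_abs κ]
  exact mul_le_mul_of_nonneg_left (hB _) (abs_nonneg _)

lemma tendsto_ramp {s c t : ℝ} :
    Tendsto (fun κ => ramp s c κ t) atTop (𝓝 ({t | 0 ≤ s * (t - c)}.indicator (fun _ => 1) t)) := by
  by_cases h : 0 ≤ s * (t - c)
  · rw [indicator_of_mem (by exact h)]
    refine tendsto_const_nhds.congr' ?_
    filter_upwards [eventually_ge_atTop (0 : ℝ)] with κ hκ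
    exact (Real.smoothTransition.one_of_one_le (by nlinarith [mul_nonneg hκ h])).symm
  · rw [indicator_of_notMem (by exact h)]
    refine tendsto_const_nhds.congr' ?_
    rw [not_le] at h
    have := (tendsto_id (α := ℝ) (x := atTop)).atTop_mul_const_of_neg h
    filter_upwards [this.eventually_le_atBot (-1)] with κ hκ
    exact (Real.smoothTransition.zero_of_nonpos (by simp only [id] at hκ; linarith)).symm

lemma tendsto_integral_peak_mul {s : ℝ} (hs : s = 1 ∨ s = -1) (c : ℝ) {g : ℝ → ℝ}
    (hg : Continuous g) (hi : Integrable g) :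
    Tendsto (fun κ => ∫ t, peak s c κ t * g t) atTop (𝓝 (g c)) := by
  have habs : |s| = 1 := by rcases hs with rfl | rfl <;> simp
  have h := tendsto_integral_comp_smul_smul_of_integrable' (μ := (volume : Measure ℝ))
    (φ := fun u => deriv Real.smoothTransition (1 - s * u))
    (fun u => deriv_smoothTransition_nonneg _) ?_ ?_ hi (x₀ := c) hg.continuousAt
  · refine h.congr fun κ => integral_congr_ae (Eventually.of_forall fun t => ?_)
    simp only [Module.finrank_self, pow_one, smul_eq_mul, peak]
    ring_nf
  · rcases hs with rfl | rfl
    · simp only [one_mul]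
      exact (integral_sub_left_eq_self (deriv Real.smoothTransition) volume 1).trans
        integral_deriv_smoothTransition
    · simp only [neg_mul, one_mul, sub_neg_eq_add]
      exact (integral_add_left_eq_self (deriv Real.smoothTransition) 1).trans
        integral_deriv_smoothTransition
  · refine tendsto_const_nhds.congr' ?_
    filter_upwards [tendsto_norm_cobounded_atTop.eventually_gt_atTop (2 : ℝ)] with u hu
    rw [deriv_smoothTransition_eq_zero, mul_zero]
    rintro ⟨h1, h2⟩
    have : |s * u| ≤ 1 := abs_le.2 ⟨by linarith, by linarith⟩
    rw [abs_mul, habs, one_mul] at this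
    rw [Real.norm_eq_abs] at hu
    linarith

/-! ### The weighted perimeter of coordinate half-spaces -/

lemma contDiff_coord {n : ℕ} (i : Fin n) : ContDiff ℝ 1 fun x : En n => x i := by
  fun_prop

lemma dvg_smul_coord {n : ℕ} {η : ℝ → ℝ} (hη : ContDiff ℝ 1 η) {φ : En n → En n}
    (hφ : ContDiff ℝ 1 φ) (i : Fin n) (x : En n) :
    dvg (fun y => η (y i) • φ y) x = η (x i) * dvg φ x + deriv η (x i) * φ x i := by
  have h1 : HasFDerivAt (fun y : En n => η (y i))
      (deriv η (x i) • (EuclideanSpace.proj i : En n →L[ℝ] ℝ)) x :=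
    ((hη.differentiable (by norm_num) (x i)).hasDerivAt).comp_hasFDerivAt x
      (EuclideanSpace.proj i : En n →L[ℝ] ℝ).hasFDerivAt
  have h2 := (hφ.differentiable (by norm_num) x).hasFDerivAt
  have h3 : HasFDerivAt (fun y => η (y i) • φ y) _ x := h1.smul h2
  simp only [dvg, h3.fderiv]
  have h4 : ∀ j : Fin n, ((if i = j then deriv η (x i) • φ x else 0 : En n)) j =
      if i = j then deriv η (x i) * φ x i else 0 := fun j => by
    split_ifs with h
    · subst h; rfl
    · rfl
  simp [Finset.sum_add_distrib, Finset.mul_sum, PiLp.single_apply, h4]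

lemma continuous_dvg {n : ℕ} {φ : En n → En n} (hφ : ContDiff ℝ 1 φ) : Continuous (dvg φ) := by
  have := hφ.continuous_fderiv (by norm_num)
  unfold dvg
  fun_prop

lemma hasCompactSupport_dvg {n : ℕ} {φ : En n → En n} (hφ : HasCompactSupport φ) :
    HasCompactSupport (dvg φ) := by
  refine (hφ.fderiv (𝕜 := ℝ)).mono fun x hx => ?_
  contrapose! hx
  have : fderiv ℝ φ x = 0 := by simpa using hx
  simp [dvg, this]

lemma integrable_pairing {n : ℕ} {f : En n → ℝ} {f' : En n → En n} (hW : HasWeakGrad f f')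
    {φ : En n → En n} (h1 : ContDiff ℝ 1 φ) (h2 : HasCompactSupport φ) :
    Integrable (fun x => f x * dvg φ x) ∧ Integrable fun x => ⟪φ x, f' x⟫ := by
  obtain ⟨hf, hf', -⟩ := hW
  refine ⟨hf.integrable_smul_right_of_hasCompactSupport (continuous_dvg h1)
    (hasCompactSupport_dvg h2), ?_⟩
  have h := hf'.integrable_smul_left_of_hasCompactSupport h1.continuous.norm h2.norm
  refine h.mono (h1.continuous.aestronglyMeasurable.inner hf'.aestronglyMeasurable)
    (Eventually.of_forall fun x => ?_)
  rw [norm_smul, norm_norm]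
  exact norm_inner_le_norm _ _

/-- Testing the weak gradient against `η (x i) • φ x`. -/
lemma integral_cutoff {n : ℕ} {f : En n → ℝ} {f' : En n → En n} (hW : HasWeakGrad f f')
    {η : ℝ → ℝ} (hη : ContDiff ℝ 1 η) {φ : En n → En n} (h1 : ContDiff ℝ 1 φ)
    (h2 : HasCompactSupport φ) (i : Fin n) :
    ∫ x, deriv η (x i) * (f x * φ x i) =
      -∫ x, η (x i) * (f x * dvg φ x + ⟪φ x, f' x⟫) := by
  have hc : Continuous fun x : En n => η (x i) := hη.continuous.comp (by fun_prop)
  have hd : Continuous fun x : En n => deriv η (x i) :=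
    (hη.continuous_deriv le_rfl).comp (by fun_prop)
  have hψ : ContDiff ℝ 1 fun y : En n => η (y i) • φ y :=
    (hη.comp (contDiff_coord i)).smul h1
  have hψs : HasCompactSupport fun y : En n => η (y i) • φ y :=
    h2.mono fun x hx => by
      contrapose! hx
      have : φ x = 0 := by simpa using hx
      simp [this]
  have key := hW.2.2 _ hψ hψs
  have i1 : Integrable fun x => η (x i) * (f x * dvg φ x) := by
    have : Integrable fun x => f x • (η (x i) * dvg φ x) :=
      hW.1.integrable_smul_right_of_hasCompactSupport (hc.mul (continuous_dvg h1))
        (hasCompactSupport_dvg h2).mul_left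
    refine this.congr (Eventually.of_forall fun x => ?_)
    simp only [smul_eq_mul]; ring
  have i2 : Integrable fun x => deriv η (x i) * (f x * φ x i) := by
    have hφi : HasCompactSupport fun x => φ x i := h2.comp_left (g := fun y : En n => y i) (by simp)
    have hφc : Continuous fun x => φ x i := by have := h1.continuous; fun_prop
    have : Integrable fun x => f x • (deriv η (x i) * φ x i) :=
      hW.1.integrable_smul_right_of_hasCompactSupport (hd.mul hφc) hφi.mul_left
    refine this.congr (Eventually.of_forall fun x => ?_)
    simp only [smul_eq_mul]; ring
  have i3 : Integrable fun x => η (x i) * ⟪φ x, f' x⟫ := by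
    simpa only [real_inner_smul_left] using (integrable_pairing hW hψ hψs).2
  simp only [dvg_smul_coord hη h1, real_inner_smul_left] at key
  have e1 : (∫ x, f x * (η (x i) * dvg φ x + deriv η (x i) * φ x i)) =
      (∫ x, η (x i) * (f x * dvg φ x)) + ∫ x, deriv η (x i) * (f x * φ x i) := by
    rw [← integral_add i1 i2]
    congr 1; ext x; ring
  have e2 : (∫ x, η (x i) * (f x * dvg φ x + ⟪φ x, f' x⟫)) =
      (∫ x, η (x i) * (f x * dvg φ x)) + ∫ x, η (x i) * ⟪φ x, f' x⟫ := by
    rw [← integral_add i1 i3]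
    congr 1; ext x; ring
  rw [e1] at key
  rw [e2, neg_add, ← key]
  abel

/-- The half-space `{x | x i ≥ c}` for `s = 1`, and `{x | x i ≤ c}` for `s = -1`. -/
def coordHalf {n : ℕ} (i : Fin n) (s c : ℝ) : Set (En n) := {x | 0 ≤ s * (x i - c)}

/-- A Gauss–Green formula for coordinate half-spaces: the flux of `f • φ` through the hyperplane
`{x | x i = c}` is expressed as a limit of integrals over thin slabs. -/
lemma tendsto_slab {n : ℕ} {f : En n → ℝ} {f' : En n → En n} (hW : HasWeakGrad f f')
    (s c : ℝ) {φ : En n → En n} (h1 : ContDiff ℝ 1 φ)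
    (h2 : HasCompactSupport φ) (i : Fin n) :
    Tendsto (fun κ => -s * ∫ x, peak s c κ (x i) * (f x * φ x i)) atTop
      (𝓝 (∫ x, (coordHalf i s c).indicator (fun _ => (1 : ℝ)) x *
        (f x * dvg φ x + ⟪φ x, f' x⟫))) := by
  have hw := (integrable_pairing hW h1 h2).1.add (integrable_pairing hW h1 h2).2
  have hlim : Tendsto (fun κ => ∫ x, ramp s c κ (x i) * (f x * dvg φ x + ⟪φ x, f' x⟫)) atTop
      (𝓝 (∫ x, (coordHalf i s c).indicator (fun _ => (1 : ℝ)) x *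
        (f x * dvg φ x + ⟪φ x, f' x⟫))) := by
    refine tendsto_integral_filter_of_dominated_convergence
      (fun x => ‖f x * dvg φ x + ⟪φ x, f' x⟫‖) (Eventually.of_forall fun κ => ?_)
      (Eventually.of_forall fun κ => Eventually.of_forall fun x => ?_) hw.norm
      (Eventually.of_forall fun x => ?_)
    · have : Continuous fun x : En n => ramp s c κ (x i) :=
        (ramp_contDiff s c κ).continuous.comp (by fun_prop)
      exact this.aestronglyMeasurable.mul hw.aestronglyMeasurable
    · rw [norm_mul]
      refine mul_le_of_le_one_left (norm_nonneg _) ?_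
      rw [Real.norm_eq_abs, ramp, abs_of_nonneg (Real.smoothTransition.nonneg _)]
      exact Real.smoothTransition.le_one _
    · exact (tendsto_ramp (s := s) (c := c) (t := x i)).mul_const _
  refine hlim.congr fun κ => ?_
  have h := integral_cutoff hW (ramp_contDiff s c κ) h1 h2 i
  simp only [deriv_ramp, mul_assoc] at h
  rw [integral_const_mul] at h
  linarith

section Product

variable {n : ℕ} {f : En n → ℝ} {f' : En n → En n} {F : Fin n → ℝ → ℝ}

/-- With `le_perim_coordHalf`: the perimeter of a coordinate half-space is the integral of the
density over its boundary hyperplane. -/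
lemma perim_coordHalf_le (hW : HasWeakGrad f f') (hFc : ∀ i, Continuous (F i))
    (hFp : ∀ i t, 0 < F i t) (hFi : ∀ i, Integrable (F i))
    (hfF : ∀ x : En n, f x = ∏ i, F i (x i)) {s : ℝ} (hs : s = 1 ∨ s = -1) (i : Fin n) (c : ℝ) :
    perim f f' univ (coordHalf i s c) ≤
      ENNReal.ofReal (F i c * ∏ j ∈ Finset.univ.erase i, ∫ t, F j t) := by
  refine iSup₂_le fun φ hφ => ENNReal.ofReal_le_ofReal ?_
  rw [Measure.restrict_univ]
  refine le_of_tendsto_of_tendsto (tendsto_slab hW s c hφ.1 hφ.2.1 i)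
    ((tendsto_integral_peak_mul hs c (hFc i) (hFi i)).mul_const _) ?_
  filter_upwards [eventually_ge_atTop (0 : ℝ)] with κ hκ
  have habs : |(-s)| = 1 := by rcases hs with rfl | rfl <;> simp
  refine (le_abs_self _).trans ?_
  rw [abs_mul, habs, one_mul, ← integral_mul_prod, ← Real.norm_eq_abs]
  refine norm_integral_le_of_norm_le
    (integrable_mul_prod hFi i (integrable_peak_mul s c κ (hFi i)))
    (Eventually.of_forall fun x => ?_)
  have hf0 : 0 ≤ ∏ j, F j (x j) := Finset.prod_nonneg fun j _ => (hFp j _).le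
  rw [norm_mul, norm_mul, Real.norm_of_nonneg (peak_nonneg _ _ _ hκ), hfF,
    Real.norm_of_nonneg hf0]
  refine mul_le_mul_of_nonneg_left ?_ (peak_nonneg _ _ _ hκ)
  exact mul_le_of_le_one_right hf0 ((PiLp.norm_apply_le (p := 2) (φ x) i).trans (hφ.2.2.2 x))

/-- A smooth cutoff on the line, equal to `1` on `[-(k+1), k+1]`. -/
def lineCutoff (k : ℕ) : ContDiffBump (0 : ℝ) :=
  ⟨k + 1, k + 2, by positivity, by linarith⟩

lemma tendsto_lineCutoff (t : ℝ) : Tendsto (fun k => lineCutoff k t) atTop (𝓝 1) := by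
  obtain ⟨N, hN⟩ := exists_nat_ge |t|
  refine tendsto_const_nhds.congr' ?_
  filter_upwards [eventually_ge_atTop N] with k hk
  refine ((lineCutoff k).one_of_mem_closedBall ?_).symm
  have : (N : ℝ) ≤ k := by exact_mod_cast hk
  simp only [lineCutoff, mem_closedBall_zero_iff, Real.norm_eq_abs]
  linarith

/-- The field `s • e_i`, cut off outside a large box by a product of one-dimensional cutoffs. -/
def boxField (n k : ℕ) (s : ℝ) (i : Fin n) (x : En n) : En n :=
  (∏ j, lineCutoff k (x j)) • EuclideanSpace.single i s

lemma isTestField_boxField (n k : ℕ) {s : ℝ} (hs : s = 1 ∨ s = -1) (i : Fin n) :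
    IsTestField univ (boxField n k s i) := by
  refine ⟨?_, ?_, subset_univ _, fun x => ?_⟩
  · have h : ContDiff ℝ 1 fun x : En n => ∏ j, lineCutoff k (x j) :=
      contDiff_prod fun j _ => (lineCutoff k).contDiff.comp (contDiff_coord j)
    exact h.smul contDiff_const
  · have hK : IsCompact ((EuclideanSpace.equiv (Fin n) ℝ).toHomeomorph ⁻¹'
        (univ.pi fun _ => Metric.closedBall (0 : ℝ) (k + 2))) :=
      (EuclideanSpace.equiv (Fin n) ℝ).toHomeomorph.isCompact_preimage.2
        (isCompact_univ_pi fun _ => isCompact_closedBall _ _)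
    refine HasCompactSupport.intro hK fun x hx => ?_
    obtain ⟨j, hj⟩ : ∃ j, x j ∉ Metric.closedBall (0 : ℝ) (k + 2) := by
      by_contra! h
      exact hx fun j _ => h j
    have h0 : lineCutoff k (x j) = 0 := by
      refine (lineCutoff k).zero_of_le_dist ?_
      rw [Metric.mem_closedBall, not_le] at hj
      exact hj.le
    rw [boxField, Finset.prod_eq_zero (Finset.mem_univ j) h0, zero_smul]
  · have hn : ‖EuclideanSpace.single i s‖ = 1 := by
      rw [PiLp.norm_single]; rcases hs with rfl | rfl <;> simp
    rw [boxField, norm_smul, hn, mul_one, norm_prod]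
    refine Finset.prod_le_one (fun j _ => norm_nonneg _) fun j _ => ?_
    rw [Real.norm_of_nonneg (lineCutoff k).nonneg]
    exact (lineCutoff k).le_one

lemma le_perim_coordHalf (hW : HasWeakGrad f f') (hFc : ∀ i, Continuous (F i))
    (hFi : ∀ i, Integrable (F i))
    (hfF : ∀ x : En n, f x = ∏ i, F i (x i)) {s : ℝ} (hs : s = 1 ∨ s = -1) (i : Fin n) (c : ℝ) :
    ENNReal.ofReal (F i c * ∏ j ∈ Finset.univ.erase i, ∫ t, F j t) ≤
      perim f f' univ (coordHalf i s c) := by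
  have hs' : -s = 1 ∨ -s = -1 := by rcases hs with rfl | rfl <;> simp
  have hss : s * s = 1 := by rcases hs with rfl | rfl <;> simp
  have hle1 : ∀ (k : ℕ) (t : ℝ), ‖lineCutoff k t‖ ≤ 1 := fun k t => by
    rw [Real.norm_of_nonneg (lineCutoff k).nonneg]; exact (lineCutoff k).le_one
  -- The field pointing out of the half-space has the largest flux.
  have hval : ∀ k : ℕ, ∫ x, (coordHalf i s c).indicator (fun _ => (1 : ℝ)) x *
      (f x * dvg (boxField n k (-s) i) x + ⟪boxField n k (-s) i x, f' x⟫) =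
      (lineCutoff k c * F i c) * ∏ j ∈ Finset.univ.erase i, ∫ t, lineCutoff k t * F j t := by
    intro k
    have hT := isTestField_boxField n k hs' i
    have hint : ∀ j, Integrable fun t => lineCutoff k t * F j t := fun j =>
      (hFi j).bdd_mul (c := 1) (lineCutoff k).continuous.aestronglyMeasurable
        (Eventually.of_forall (hle1 k))
    refine tendsto_nhds_unique (tendsto_slab hW s c hT.1 hT.2.1 i) ?_
    refine ((tendsto_integral_peak_mul hs c ((lineCutoff k).continuous.mul (hFc i))
      (hint i)).mul_const (∏ j ∈ Finset.univ.erase i, ∫ t, lineCutoff k t * F j t)).congr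
      fun κ => ?_
    simp only [Pi.mul_apply]
    rw [← integral_mul_prod (fun j t => lineCutoff k t * F j t) i (peak s c κ),
      ← integral_const_mul]
    refine integral_congr_ae (Eventually.of_forall fun x => ?_)
    simp only [boxField, hfF, Finset.prod_mul_distrib, PiLp.smul_apply,
      PiLp.single_apply, if_true, smul_eq_mul]
    linear_combination (peak s c κ (x i) * (∏ j, F j (x j)) * ∏ j, lineCutoff k (x j)) * (-hss)
  have hlim : Tendsto (fun k : ℕ => (lineCutoff k c * F i c) *
      ∏ j ∈ Finset.univ.erase i, ∫ t, lineCutoff k t * F j t) atTop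
      (𝓝 ((1 * F i c) * ∏ j ∈ Finset.univ.erase i, ∫ t, F j t)) := by
    refine ((tendsto_lineCutoff c).mul_const _).mul (tendsto_finsetProd _ fun j _ => ?_)
    refine tendsto_integral_of_dominated_convergence (fun t => ‖F j t‖)
      (fun k => ((lineCutoff k).continuous.mul (hFc j)).aestronglyMeasurable) (hFi j).norm
      (fun k => Eventually.of_forall fun t => ?_) (Eventually.of_forall fun t => ?_)
    · rw [norm_mul]
      exact mul_le_of_le_one_left (norm_nonneg _) (hle1 k t)
    · simpa using (tendsto_lineCutoff t).mul_const (F j t)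
  rw [one_mul] at hlim
  refine le_of_tendsto (ENNReal.tendsto_ofReal hlim) (Eventually.of_forall fun k => ?_)
  rw [← hval k]
  have := le_iSup₂ (f := fun (φ : En n → En n) (_ : IsTestField univ φ) =>
    ENNReal.ofReal (∫ x in univ, (coordHalf i s c).indicator (fun _ => (1 : ℝ)) x *
      (f x * dvg φ x + ⟪φ x, f' x⟫))) _ (isTestField_boxField n k hs' i)
  simpa only [perim, bvVar, Measure.restrict_univ] using this

/-! ### Symmetrizing coordinate half-spaces -/

/-- Symmetrizing `{x | x i ≥ c}` in direction `-e_i` gives the half-space `{x | x i ≤ c'}` whose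
fibers have the same mass. -/
lemma ehrhardSymm_coordHalf (hFc : ∀ i, Continuous (F i))
    (hFp : ∀ i t, 0 < F i t) (hFi : ∀ i, Integrable (F i))
    (hfF : ∀ x : En n, f x = ∏ i, F i (x i)) (i : Fin n) {c c' : ℝ}
    (hcc : ∫ y in Iic c', F i y = ∫ y in Ioi c, F i y) :
    ehrhardSymm f (EuclideanSpace.single i (-1)) (coordHalf i 1 c) = coordHalf i (-1) c' := by
  ext z
  set v : En n := EuclideanSpace.single i (-1) with hv
  have hzv : ⟪z, v⟫ = - z i := by simp [hv, EuclideanSpace.inner_single_right]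
  have hi : ∀ t : ℝ, (z - ⟪z, v⟫ • v + t • v) i = -t := fun t => by
    rw [hzv]; simp [hv]
  have hj : ∀ t : ℝ, ∀ j ≠ i, (z - ⟪z, v⟫ • v + t • v) j = z j := fun t j h => by simp [hv, h]
  set C := ∏ j ∈ Finset.univ.erase i, F j (z j) with hC
  have hC0 : 0 < C := Finset.prod_pos fun j _ => hFp j _
  have hf : ∀ t : ℝ, f (z - ⟪z, v⟫ • v + t • v) = C * F i (-t) := fun t => by
    rw [hfF, ← Finset.mul_prod_erase _ _ (Finset.mem_univ i), hi, mul_comm, hC]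
    congr 1
    refine Finset.prod_congr rfl fun j h => ?_
    rw [hj t j (Finset.ne_of_mem_erase h)]
  set ν := fiberMeasure f (z - ⟪z, v⟫ • v) v with hν
  have hνS : ∀ S : Set ℝ, MeasurableSet S →
      ν S = ENNReal.ofReal (C * ∫ t in S, F i (-t)) := fun S hS => by
    rw [hν, fiberMeasure, withDensity_apply _ hS, ← integral_const_mul,
      ofReal_integral_eq_lintegral_ofReal]
    · simp only [hf]
    · exact ((hFi i).comp_neg.const_mul C).integrableOn
    · exact Eventually.of_forall fun t => mul_nonneg hC0.le (hFp i _).le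
  have hA : {t : ℝ | z - ⟪z, v⟫ • v + t • v ∈ coordHalf i 1 c} = Iic (-c) := by
    ext t
    simp only [coordHalf, mem_ofPred_eq, hi, mem_Iic]
    constructor <;> intro h <;> linarith
  have hB : ∀ b : ℝ, {y : ℝ | b ≤ 1 * y} = Ici b := fun b => by ext; simp
  have hiff : ∀ b : ℝ, ν {y | b ≤ 1 * y} ≤ ν (Iic (-c)) ↔ -c' ≤ b := fun b => by
    rw [hB, hνS _ measurableSet_Ici, hνS _ measurableSet_Iic, integral_comp_neg_Iic, neg_neg,
      ← hcc, integral_Ici_eq_integral_Ioi, integral_comp_neg_Ioi,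
      ENNReal.ofReal_le_ofReal_iff (mul_nonneg hC0.le
        (integral_nonneg fun t => (hFp i _).le)), mul_le_mul_iff_right₀ hC0,
      (strictMono_integral_Iic (hFc i) (hFi i) (hFp i)).le_iff_le]
    exact neg_le
  simp only [ehrhardSymm, mem_ofPred_eq]
  rw [hA, ← hν]
  simp only [ehrhard1D, mem_ofPred_eq, hiff, coordHalf, hzv]
  constructor
  · intro h
    have := h (-c') fun b hb => hb
    linarith
  · intro h b hb
    have := hb (-c') le_rfl
    linarith

/-- The symmetrization inequality for one coordinate half-space, read off on the `i`-th factor: the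
other factors contribute the same finite positive constant to both perimeters. -/
lemma factor_le (hPS : IsPSMeasure f f') (hW : HasWeakGrad f f') (hFc : ∀ i, Continuous (F i))
    (hFp : ∀ i t, 0 < F i t) (hFi : ∀ i, Integrable (F i)) (hFI : ∀ i, 0 < ∫ t, F i t)
    (hfF : ∀ x : En n, f x = ∏ i, F i (x i)) (i : Fin n) {c c' : ℝ}
    (hcc : ∫ y in Iic c', F i y = ∫ y in Ioi c, F i y) : F i c' ≤ F i c := by
  have hup := perim_coordHalf_le hW hFc hFp hFi hfF (Or.inl rfl) i c
  have hlow := le_perim_coordHalf hW hFc hFi hfF (Or.inr rfl) i c'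
  have hmeas : MeasurableSet (coordHalf i 1 c : Set (En n)) :=
    (isClosed_le continuous_const (by fun_prop)).measurableSet
  have h := hPS (EuclideanSpace.single i (-1)) (by simp) _ hmeas.nullMeasurableSet
    (hup.trans_lt ENNReal.ofReal_lt_top)
  rw [ehrhardSymm_coordHalf hFc hFp hFi hfF i hcc] at h
  have hK : 0 < ∏ j ∈ Finset.univ.erase i, ∫ t, F j t := Finset.prod_pos fun j _ => hFI j
  have h' := (hlow.trans h).trans hup
  rw [ENNReal.ofReal_le_ofReal_iff (mul_pos (hFp i c) hK).le] at h'
  exact le_of_mul_le_mul_right h' hK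

end Product

/-- Translating a PS measure with continuous positive density yields a PS measure;
moreover a PS measure with a product density can be translated so that every factor
is even. -/
theorem ps_measure_translation {n : ℕ} (f : En n → ℝ) (f' : En n → En n)
    (hW : MemW f f') (hPS : IsPSMeasure f f')
    (hcont : Continuous f) (hpos : ∀ x, 0 < f x) (a : En n) :
    IsPSMeasure (fun x => f (x + a)) (fun x => f' (x + a)) ∧
    (∀ F : Fin n → ℝ → ℝ, (∀ i, Continuous (F i)) → (∀ i t, 0 < F i t) →
      (∀ x : En n, f x = ∏ i, F i (x i)) →
      ∃ m : En n, IsPSMeasure (fun x => f (x + m)) (fun x => f' (x + m)) ∧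
        ∃ G : Fin n → ℝ → ℝ,
          (∀ x : En n, f (x + m) = ∏ i, G i (x i)) ∧
          ∀ i, Continuous (G i) ∧ (∀ t, 0 < G i t) ∧ ∀ t : ℝ, G i (-t) = G i t) := by
  refine ⟨hPS.translate a, fun F hFc hFp hfF => ?_⟩
  have hFI := integral_factor_pos hW.2.1 hpos hFp hfF
  have hFi : ∀ i, Integrable (F i) := fun i =>
    by_contra fun h => (hFI i).ne' (integral_undef h)
  choose m hm using fun i => exists_symm_of_balanced (hFc i) (hFi i) (hFp i)
    fun c c' h => factor_le hPS hW.2.2 hFc hFp hFi hFI hfF i h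
  refine ⟨WithLp.toLp 2 m, hPS.translate _, fun i t => F i (t + m i), fun x => ?_, fun i =>
    ⟨(hFc i).comp (by fun_prop), fun t => hFp i _, hm i⟩⟩
  rw [hfF]
  rfl

end
end

section
/- Let n ≥ 2 and let μ = f·Lⁿ ∈ 𝒲(ℝⁿ) be a PS measure. Then for every v ∈ S^{n−1} and every Lebesgue-measurable set E ⊆ ℝⁿ, Per_μ(H_μ(E, v)) ≤ Per_μ(E), where H_μ(E, v) is the largest half-space in direction v with the same μ-measure as E. -/
/-!
Fix `E` of finite perimeter and let `H` be the half-space in direction `v` with `μ H = μ E`. Consider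
the class `C` of measurable sets `F` with `μ F = μ E` and `Per F ≤ Per E`. Since `μ` is a PS measure,
`C` is stable under Ehrhard symmetrization in every direction. It suffices to find sets in `C` that
converge to `H` in `μ`-measure, because the perimeter is lower semicontinuous for this convergence.

*Approximation.* Let `⟪w, v⟫ ≥ 0`. On a line in direction `w` both `H` and the symmetrization of `F`
are up-sets, hence nested, and so symmetrizing decreases the mass of `F \ H` on the line by at least
`min (ν (F \ H)) (ν (H \ F))`, where `ν` is the weighted length (`gain_fiber`, `symm_gain`). If
`d = inf {μ (F \ H) | F ∈ C}`, then the total gain in every direction is at most `μ (F \ H) - d`. On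
the other hand, `μ (F \ H) ^ 2 = μ (F \ H) * μ (H \ F)` is an integral over pairs of points, which
can be computed by integrating over directions and lines. On a line the product of the two masses is
their minimum times their maximum, so it is bounded by the gain times the total mass of the line
(`pair_direction`, `pair_estimate`). Lines of large mass and distant pairs contribute little,
uniformly in `F` (`tendsto_badPairs`). Letting `μ (F \ H)` tend to `d` gives `d = 0`
(`exists_close`); no compactness of `C` is needed.

*Lower semicontinuity.* The perimeter is a supremum of integrals `∫_F σ` with
`σ = f div φ + φ · ∇f` integrable. As `∇f = 0` almost everywhere on `{f = 0}` (`weakGrad_zero`), the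
finite measure `|σ| dx` is absolutely continuous with respect to `μ`, so these integrals are
continuous under convergence in `μ`-measure (`tendsto_integral_indicator`).
-/

open MeasureTheory Set Filter
open scoped ENNReal RealInnerProductSpace Topology

noncomputable section

/-! ### Super-level sets of prescribed mass -/

/-- The super-level set selected by the largest half-line recipe is measurable and has exactly
the prescribed mass, as soon as the level sets of `u` are null. -/
lemma upset_measure {X : Type*} [MeasurableSpace X] (ν : Measure X) [IsFiniteMeasure ν]
    (u : X → ℝ) (hu : Measurable u) (hnull : ∀ c, ν (u ⁻¹' {c}) = 0) (m : ℝ≥0∞)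
    (hm : m ≤ ν univ) :
    MeasurableSet {x | ∀ b : ℝ, (∀ c : ℝ, ν {y | c ≤ u y} ≤ m → b ≤ c) → b ≤ u x} ∧
    ν {x | ∀ b : ℝ, (∀ c : ℝ, ν {y | c ≤ u y} ≤ m → b ≤ c) → b ≤ u x} = m := by
  set T := {x | ∀ b : ℝ, (∀ c : ℝ, ν {y | c ≤ u y} ≤ m → b ≤ c) → b ≤ u x} with hT
  have hmeas : ∀ c, MeasurableSet {y | c ≤ u y} := fun c => measurableSet_le measurable_const hu
  by_cases hI : ∃ c, ν {y | c ≤ u y} ≤ m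
  · by_cases hB : BddBelow {c | ν {y | c ≤ u y} ≤ m}
    · set I := {c | ν {y | c ≤ u y} ≤ m} with hIdef
      set r := sInf I with hr
      have hne : I.Nonempty := hI
      have hTr : T = {y | r ≤ u y} := by
        ext x
        constructor
        · intro hx
          exact hx r (fun c hc => csInf_le hB hc)
        · intro hx b hb
          exact (le_csInf hne hb).trans hx
      have hup : ∀ c, r < c → ν {y | c ≤ u y} ≤ m := by
        intro c hc
        obtain ⟨d, hd, hdc⟩ := exists_lt_of_csInf_lt hne hc
        exact (measure_mono (fun y (hy : c ≤ u y) => hdc.le.trans hy)).trans hd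
      have hlo : ∀ c, c < r → m ≤ ν {y | c ≤ u y} := by
        intro c hc
        by_contra hcon
        exact absurd (csInf_le hB (show c ∈ I from (not_le.mp hcon).le)) (not_le.mpr hc)
      refine ⟨hTr ▸ hmeas r, ?_⟩
      rw [hTr]
      apply le_antisymm
      · have h1 : {y | r ≤ u y} ⊆ (u ⁻¹' {r}) ∪ ⋃ k : ℕ, {y | r + 1 / ((k : ℝ) + 1) ≤ u y} := by
          intro y hy
          rcases eq_or_lt_of_le (show r ≤ u y from hy) with h | h
          · left; exact h.symm
          · right
            obtain ⟨k, hk⟩ := exists_nat_one_div_lt (sub_pos.mpr h)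
            exact mem_iUnion.mpr ⟨k, by show r + _ ≤ u y; linarith⟩
        have hmono : Monotone (fun k : ℕ => {y | r + 1 / ((k : ℝ) + 1) ≤ u y}) := by
          intro i j hij y hy
          have : 1 / ((j : ℝ) + 1) ≤ 1 / ((i : ℝ) + 1) := Nat.one_div_le_one_div hij
          exact (add_le_add_right this r).trans hy
        calc ν {y | r ≤ u y} ≤ _ := measure_mono h1
          _ ≤ ν (u ⁻¹' {r}) + ν (⋃ k : ℕ, {y | r + 1 / ((k : ℝ) + 1) ≤ u y}) := measure_union_le _ _
          _ = ν (⋃ k : ℕ, {y | r + 1 / ((k : ℝ) + 1) ≤ u y}) := by rw [hnull, zero_add]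
          _ = ⨆ k : ℕ, ν {y | r + 1 / ((k : ℝ) + 1) ≤ u y} := hmono.measure_iUnion
          _ ≤ m := iSup_le fun k => hup _ (by
              have : (0 : ℝ) < 1 / ((k : ℝ) + 1) := by positivity
              linarith)
      · have h1 : {y | r ≤ u y} = ⋂ k : ℕ, {y | r - 1 / ((k : ℝ) + 1) ≤ u y} := by
          ext y
          simp only [mem_ofPred_eq, mem_iInter]
          constructor
          · intro h k
            have : (0 : ℝ) < 1 / ((k : ℝ) + 1) := by positivity
            linarith
          · intro h
            by_contra hc
            obtain ⟨k, hk⟩ := exists_nat_one_div_lt (sub_pos.mpr (not_le.mp hc))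
            have := h k
            linarith
        have hanti : Antitone (fun k : ℕ => {y | r - 1 / ((k : ℝ) + 1) ≤ u y}) := by
          intro i j hij y hy
          have : 1 / ((j : ℝ) + 1) ≤ 1 / ((i : ℝ) + 1) := Nat.one_div_le_one_div hij
          exact (sub_le_sub_left this r).trans hy
        rw [h1, hanti.measure_iInter (fun k => (hmeas _).nullMeasurableSet)
          ⟨0, measure_ne_top _ _⟩]
        exact le_iInf fun k => hlo _ (by
              have : (0 : ℝ) < 1 / ((k : ℝ) + 1) := by positivity
              linarith)
    · have hTu : T = univ := by
        ext x
        simp only [mem_univ, iff_true]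
        intro b hb
        exact absurd ⟨b, fun c hc => hb c hc⟩ hB
      refine ⟨hTu ▸ MeasurableSet.univ, ?_⟩
      rw [hTu]
      refine le_antisymm ?_ hm
      have h1 : (univ : Set X) = ⋃ k : ℕ, {y | -(k : ℝ) ≤ u y} := by
        ext y
        simp only [mem_univ, mem_iUnion, mem_ofPred_eq, true_iff]
        obtain ⟨k, hk⟩ := exists_nat_ge (-u y)
        exact ⟨k, by linarith⟩
      have hmono : Monotone (fun k : ℕ => {y | -(k : ℝ) ≤ u y}) := by
        intro i j hij y hy
        have h2 : (i : ℝ) ≤ j := Nat.cast_le.mpr hij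
        have h3 : -(i : ℝ) ≤ u y := hy
        show -(j : ℝ) ≤ u y
        linarith
      rw [h1, hmono.measure_iUnion]
      refine iSup_le fun k => ?_
      rw [bddBelow_def] at hB
      push Not at hB
      obtain ⟨c, hc, hck⟩ := hB (-(k : ℝ))
      exact (measure_mono (fun y hy => hck.le.trans hy)).trans hc
  · push Not at hI
    have hTe : T = ∅ := by
      ext x
      simp only [mem_empty_iff_false, iff_false]
      intro hx
      have := hx (u x + 1) (fun c hc => absurd hc (not_le.mpr (hI c)))
      linarith
    refine ⟨hTe ▸ MeasurableSet.empty, ?_⟩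
    rw [hTe, measure_empty]
    refine le_antisymm zero_le ?_
    have h1 : (∅ : Set X) = ⋂ k : ℕ, {y | (k : ℝ) ≤ u y} := by
      ext y
      simp only [mem_empty_iff_false, mem_iInter, mem_ofPred_eq, false_iff, not_forall, not_le]
      exact exists_nat_gt (u y)
    have hanti : Antitone (fun k : ℕ => {y | (k : ℝ) ≤ u y}) := by
      intro i j hij y hy
      have h2 : (i : ℝ) ≤ j := Nat.cast_le.mpr hij
      have h3 : (j : ℝ) ≤ u y := hy
      show (i : ℝ) ≤ u y
      linarith
    rw [← measure_empty (μ := ν), h1,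
      hanti.measure_iInter (fun k => (hmeas _).nullMeasurableSet) ⟨0, measure_ne_top _ _⟩]
    exact le_iInf fun k => (hI _).le

/-! ### Integration along lines -/

/-- A strictly positive probability density on `ℝ`. Weighting with `wt ⟪x, w⟫` allows the space of
lines in direction `w` to be parametrised by all of `ℝⁿ` instead of `w^⊥`. -/
def wt : ℝ → ℝ≥0∞ := ProbabilityTheory.gaussianPDF 0 1

lemma measurable_wt : Measurable wt := ProbabilityTheory.measurable_gaussianPDF 0 1

lemma wt_ne_zero (s : ℝ) : wt s ≠ 0 :=
  (ProbabilityTheory.gaussianPDF_pos 0 one_ne_zero s).ne'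

lemma lintegral_wt : ∫⁻ s, wt s = 1 := ProbabilityTheory.lintegral_gaussianPDF_eq_one 0 one_ne_zero

/-- Coordinate-free Fubini theorem along the lines in direction `w`. -/
lemma lintegral_lines {n : ℕ} (w : En n) (hw : ‖w‖ = 1) (g : En n → ℝ≥0∞) (hg : Measurable g) :
    ∫⁻ x, wt ⟪x, w⟫ * ∫⁻ t : ℝ, g (x + t • w) = ∫⁻ x, g x := by
  have hww : ⟪w, w⟫ = (1 : ℝ) := by rw [real_inner_self_eq_norm_sq, hw]; norm_num
  have hwt := measurable_wt
  calc ∫⁻ x, wt ⟪x, w⟫ * ∫⁻ t : ℝ, g (x + t • w)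
      = ∫⁻ x, ∫⁻ t : ℝ, wt ⟪x, w⟫ * g (x + t • w) := by
        refine lintegral_congr fun x => ?_
        rw [lintegral_const_mul _ (by fun_prop)]
    _ = ∫⁻ t : ℝ, ∫⁻ x, wt ⟪x, w⟫ * g (x + t • w) := by
        rw [lintegral_lintegral_swap]
        exact (by fun_prop : Measurable (fun p : En n × ℝ => wt ⟪p.1, w⟫ * g (p.1 + p.2 • w))).aemeasurable
    _ = ∫⁻ t : ℝ, ∫⁻ x, wt (⟪x, w⟫ - t) * g x := by
        refine lintegral_congr fun t => ?_
        rw [← lintegral_add_right_eq_self (fun x => wt (⟪x, w⟫ - t) * g x) (t • w)]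
        refine lintegral_congr fun x => ?_
        rw [inner_add_left, real_inner_smul_left, hww]
        simp
    _ = ∫⁻ x, ∫⁻ t : ℝ, wt (⟪x, w⟫ - t) * g x := by
        rw [lintegral_lintegral_swap]
        exact (by fun_prop : Measurable (fun p : ℝ × En n => wt (⟪p.2, w⟫ - p.1) * g p.2)).aemeasurable
    _ = ∫⁻ x, g x := by
        refine lintegral_congr fun x => ?_
        rw [lintegral_mul_const _ (by fun_prop), lintegral_sub_left_eq_self wt, lintegral_wt, one_mul]

lemma ae_lines {n : ℕ} (w : En n) (hw : ‖w‖ = 1) {p : En n → Prop} (hp : ∀ᵐ x, p x) :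
    ∀ᵐ x : En n, ∀ᵐ t : ℝ, p (x + t • w) := by
  obtain ⟨N, hN, hNm, hN0⟩ := exists_measurable_superset_of_null hp
  have h := lintegral_lines w hw (N.indicator 1) (measurable_one.indicator hNm)
  rw [lintegral_indicator_one hNm, hN0, lintegral_eq_zero_iff] at h
  · filter_upwards [h] with x hx
    have hx' : ∫⁻ t : ℝ, N.indicator 1 (x + t • w) = 0 := by
      simpa [wt_ne_zero] using hx
    have hmx : Measurable (fun t : ℝ => N.indicator (1 : En n → ℝ≥0∞) (x + t • w)) :=
      (measurable_one.indicator hNm).comp (by fun_prop)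
    rw [lintegral_eq_zero_iff hmx] at hx'
    filter_upwards [hx'] with t ht
    by_contra hc
    have : x + t • w ∈ N := hN hc
    simp [this] at ht
  · have := measurable_wt
    have h2 : Measurable (fun q : En n × ℝ => N.indicator (1 : En n → ℝ≥0∞) (q.1 + q.2 • w)) :=
      (measurable_one.indicator hNm).comp (by fun_prop)
    exact (by fun_prop : Measurable fun x : En n => wt ⟪x, w⟫).mul h2.lintegral_prod_right'

lemma ae_lines_lt_top {n : ℕ} (w : En n) (hw : ‖w‖ = 1) (g : En n → ℝ≥0∞) (hg : Measurable g)
    (hgf : ∫⁻ x, g x ≠ ⊤) : ∀ᵐ x : En n, ∫⁻ t : ℝ, g (x + t • w) < ⊤ := by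
  rw [← lintegral_lines w hw g hg] at hgf
  have hwt := measurable_wt
  have h2 : Measurable (fun x : En n => ∫⁻ t : ℝ, g (x + t • w)) :=
    (by fun_prop : Measurable (fun q : En n × ℝ => g (q.1 + q.2 • w))).lintegral_prod_right'
  have := ae_lt_top ((by fun_prop : Measurable fun x : En n => wt ⟪x, w⟫).mul h2) hgf
  filter_upwards [this] with x hx
  by_contra hc
  rw [not_lt, top_le_iff] at hc
  simp only [Pi.mul_apply] at hx
  rw [hc, ENNReal.mul_top (wt_ne_zero _)] at hx
  exact lt_irrefl _ hx

/-! ### Symmetrization in one direction -/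

/-- The fiber of `ehrhardSymm f w F` on the line through an arbitrary point `x`, expressed with the
line parametrised from `x` instead of from its projection to `w^⊥`. -/
lemma mem_ehrhardSymm_line {n : ℕ} (f : En n → ℝ) (w : En n) (hw : ‖w‖ = 1) (F : Set (En n))
    (x : En n) (t : ℝ) :
    x + t • w ∈ ehrhardSymm f w F ↔
      ∀ b : ℝ, (∀ c : ℝ, fiberMeasure f x w {s | c ≤ ⟪x, w⟫ + s} ≤
        fiberMeasure f x w {s | x + s • w ∈ F} → b ≤ c) → b ≤ ⟪x, w⟫ + t := by
  have hww : ⟪w, w⟫ = (1 : ℝ) := by rw [real_inner_self_eq_norm_sq, hw]; norm_num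
  have h1 : ⟪x + t • w, w⟫ = ⟪x, w⟫ + t := by
    rw [inner_add_left, real_inner_smul_left, hww, mul_one]
  have h2 : x + t • w - (⟪x, w⟫ + t) • w = x - ⟪x, w⟫ • w := by
    rw [add_smul]; abel
  set a : ℝ := ⟪x, w⟫ with ha
  have hmap : fiberMeasure f (x - a • w) w
      = Measure.map (MeasurableEquiv.addLeft a) (fiberMeasure f x w) := by
    ext s hs
    rw [MeasurableEquiv.map_apply, fiberMeasure, fiberMeasure, withDensity_apply _ hs,
      withDensity_apply _ ((MeasurableEquiv.addLeft a).measurable hs),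
      ← lintegral_indicator hs, ← lintegral_indicator ((MeasurableEquiv.addLeft a).measurable hs),
      ← lintegral_add_left_eq_self _ a]
    refine lintegral_congr fun r => ?_
    have : x - a • w + (a + r) • w = x + r • w := by rw [add_smul]; abel
    by_cases hr : a + r ∈ s
    · rw [indicator_of_mem hr, indicator_of_mem (by simpa using hr), this]
    · rw [indicator_of_notMem hr, indicator_of_notMem (by simpa using hr)]
  have key : ∀ s : Set ℝ, fiberMeasure f (x - a • w) w s
      = fiberMeasure f x w {r | a + r ∈ s} := by
    intro s
    rw [hmap, MeasurableEquiv.map_apply]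
    rfl
  show ⟪x + t • w, w⟫ ∈ ehrhard1D (fiberMeasure f (x + t • w - ⟪x + t • w, w⟫ • w) w) 1
        {s | (x + t • w - ⟪x + t • w, w⟫ • w) + s • w ∈ F} ↔ _
  rw [h1, h2]
  simp only [ehrhard1D, mem_ofPred_eq, key, one_mul]
  have h3 : ∀ r : ℝ, x - a • w + (a + r) • w = x + r • w := by
    intro r; rw [add_smul]; abel
  simp only [h3]

lemma fiberMeasure_ae_eq {n : ℕ} (f : En n → ℝ) (g : En n → ℝ≥0∞)
    (hfg : g =ᵐ[volume] fun x => ENNReal.ofReal (f x)) (w : En n) (hw : ‖w‖ = 1) :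
    ∀ᵐ x : En n, fiberMeasure f x w = (volume : Measure ℝ).withDensity fun t => g (x + t • w) := by
  filter_upwards [ae_lines w hw hfg] with x hx
  exact withDensity_congr_ae (hx.mono fun t ht => ht.symm)

lemma fiber_apply {n : ℕ} (g : En n → ℝ≥0∞) (x w : En n)
    {B : Set (En n)} (hB : MeasurableSet B) :
    ((volume : Measure ℝ).withDensity fun t => g (x + t • w)) {t | x + t • w ∈ B}
      = ∫⁻ t : ℝ, B.indicator g (x + t • w) := by
  have hm : MeasurableSet {t : ℝ | x + t • w ∈ B} :=
    (by fun_prop : Measurable fun t : ℝ => x + t • w) hB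
  rw [withDensity_apply _ hm, ← lintegral_indicator hm]
  rfl

/-- On almost every line in direction `w` the symmetrized set is a measurable up-set with the same
mass as `F`. -/
lemma symm_fiber {n : ℕ} (f : En n → ℝ) (g : En n → ℝ≥0∞) (hg : Measurable g)
    (hgf : ∫⁻ x, g x ≠ ⊤)
    (hfg : g =ᵐ[volume] fun x => ENNReal.ofReal (f x)) (w : En n) (hw : ‖w‖ = 1)
    (F : Set (En n)) :
    ∀ᵐ x : En n,
      MeasurableSet {t : ℝ | x + t • w ∈ ehrhardSymm f w F} ∧
      ((volume : Measure ℝ).withDensity fun t => g (x + t • w))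
        {t : ℝ | x + t • w ∈ ehrhardSymm f w F} =
      ((volume : Measure ℝ).withDensity fun t => g (x + t • w)) {t : ℝ | x + t • w ∈ F} ∧
      ∀ s t : ℝ, s ≤ t → x + s • w ∈ ehrhardSymm f w F → x + t • w ∈ ehrhardSymm f w F := by
  filter_upwards [fiberMeasure_ae_eq f g hfg w hw, ae_lines_lt_top w hw g hg hgf] with x hx hfin
  have : IsFiniteMeasure ((volume : Measure ℝ).withDensity fun t => g (x + t • w)) :=
    isFiniteMeasure_withDensity hfin.ne
  have key := upset_measure ((volume : Measure ℝ).withDensity fun t => g (x + t • w))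
    (fun s => ⟪x, w⟫ + s) (by fun_prop) (fun c => by
      apply withDensity_absolutelyContinuous
      have : (fun s : ℝ => ⟪x, w⟫ + s) ⁻¹' {c} = {c - ⟪x, w⟫} := by
        ext s; simp only [mem_preimage, mem_singleton_iff]
        constructor <;> intro h <;> linarith
      rw [this]; simp)
    (((volume : Measure ℝ).withDensity fun t => g (x + t • w)) {t : ℝ | x + t • w ∈ F})
    (measure_mono (subset_univ _))
  have hset : {t : ℝ | x + t • w ∈ ehrhardSymm f w F} = {t | ∀ b : ℝ, (∀ c : ℝ,
      ((volume : Measure ℝ).withDensity fun t => g (x + t • w)) {s | c ≤ ⟪x, w⟫ + s} ≤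
      ((volume : Measure ℝ).withDensity fun t => g (x + t • w)) {t : ℝ | x + t • w ∈ F} →
       b ≤ c) → b ≤ ⟪x, w⟫ + t} := by
    ext t
    simp only [mem_ofPred_eq]
    rw [mem_ehrhardSymm_line f w hw, hx]
  rw [hset]
  refine ⟨key.1, key.2, ?_⟩
  intro s t hst hs
  rw [mem_ehrhardSymm_line f w hw] at hs ⊢
  intro b hb
  have := hs b hb
  linarith

lemma symm_nullMeasurable {n : ℕ} (f : En n → ℝ) (g : En n → ℝ≥0∞) (hg : Measurable g)
    (hfg : g =ᵐ[volume] fun x => ENNReal.ofReal (f x)) (w : En n) (hw : ‖w‖ = 1)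
    (F : Set (En n)) (hF : MeasurableSet F) :
    NullMeasurableSet (ehrhardSymm f w F) volume := by
  -- only rational thresholds are needed to describe the symmetrized set
  let Q : Set (En n) := {z | ∀ q : ℚ, ⟪z, w⟫ < (q : ℝ) → ∃ c : ℚ, c < q ∧
    ∫⁻ t : ℝ, (halfSpace w (c : ℝ)).indicator g (z + t • w) ≤
      ∫⁻ t : ℝ, F.indicator g (z + t • w)}
  have hH : ∀ c : ℝ, MeasurableSet (halfSpace w c) := fun c =>
    measurableSet_le measurable_const (by fun_prop)
  have hm : ∀ B : Set (En n), MeasurableSet B →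
      Measurable (fun z : En n => ∫⁻ t : ℝ, B.indicator g (z + t • w)) := by
    intro B hB
    have h1 : Measurable (B.indicator g) := hg.indicator hB
    exact (by fun_prop : Measurable
      (fun q : En n × ℝ => B.indicator g (q.1 + q.2 • w))).lintegral_prod_right'
  have hQ : MeasurableSet Q := by
    have : Q = ⋂ q : ℚ, ({z | ⟪z, w⟫ < (q : ℝ)}ᶜ ∪ ⋃ c : ℚ, ⋃ _ : c < q,
        {z | ∫⁻ t : ℝ, (halfSpace w (c : ℝ)).indicator g (z + t • w) ≤
      ∫⁻ t : ℝ, F.indicator g (z + t • w)}) := by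
      ext z
      simp only [Q, mem_ofPred_eq, mem_iInter, mem_union, mem_compl_iff, mem_iUnion, exists_prop,
        imp_iff_not_or]
    rw [this]
    refine MeasurableSet.iInter fun q => (measurableSet_lt (by fun_prop)
      measurable_const).compl.union (MeasurableSet.iUnion fun c => MeasurableSet.iUnion fun _ => ?_)
    exact measurableSet_le (hm _ (hH _)) (hm _ hF)
  refine ⟨Q, hQ, ?_⟩
  have hww : ⟪w, w⟫ = (1 : ℝ) := by rw [real_inner_self_eq_norm_sq, hw]; norm_num
  filter_upwards [fiberMeasure_ae_eq f g hfg w hw] with z hz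
  apply propext
  have h0 := mem_ehrhardSymm_line f w hw F z 0
  rw [zero_smul, add_zero, add_zero, hz, fiber_apply g z w hF] at h0
  have hhalf : ∀ c : ℝ, ((volume : Measure ℝ).withDensity fun t => g (z + t • w))
      {s | c ≤ ⟪z, w⟫ + s} = ∫⁻ t : ℝ, (halfSpace w c).indicator g (z + t • w) := by
    intro c
    rw [← fiber_apply g z w (hH c)]
    congr 1
    ext s
    simp only [halfSpace, mem_ofPred_eq, inner_add_left, real_inner_smul_left, hww, mul_one]
  simp only [hhalf] at h0
  change z ∈ ehrhardSymm f w F ↔ z ∈ Q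
  rw [h0]
  constructor
  · intro h q hq
    by_contra hcon
    push Not at hcon
    refine absurd (h q fun c hc => ?_) (not_le.mpr hq)
    by_contra hcq
    obtain ⟨c', hc1, hc2⟩ := exists_rat_btwn (not_le.mp hcq)
    have h1 := hcon c' (by exact_mod_cast hc2)
    refine absurd (h1.trans_le (le_trans (lintegral_mono fun t => ?_) hc)) (lt_irrefl _)
    exact indicator_le_indicator_of_subset (fun y (hy : (c' : ℝ) ≤ ⟪y, w⟫) => hc1.le.trans hy)
      (fun _ => zero_le) _
  · intro h b hb
    by_contra hcon
    obtain ⟨q, hq1, hq2⟩ := exists_rat_btwn (not_le.mp hcon)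
    obtain ⟨c, hc, hle⟩ := h q hq1
    have h1 := hb c hle
    have h2 : (c : ℝ) < q := by exact_mod_cast hc
    linarith

lemma mass_lines {n : ℕ} (g : En n → ℝ≥0∞) (hg : Measurable g) (w : En n) (hw : ‖w‖ = 1)
    {B : Set (En n)} (hB : MeasurableSet B) :
    (volume.withDensity g) B = ∫⁻ x, wt ⟪x, w⟫ *
      ((volume : Measure ℝ).withDensity fun t => g (x + t • w)) {t | x + t • w ∈ B} := by
  rw [withDensity_apply _ hB, ← lintegral_indicator hB,
    ← lintegral_lines w hw _ (hg.indicator hB)]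
  simp only [fiber_apply g _ w hB]

/-- One-dimensional gain: replacing `A` by an up-set `T` of the same mass decreases the mass outside
an up-set `H` by at least `min (ν (A \ H)) (ν (H \ A))`. -/
lemma gain_fiber (ν : Measure ℝ) [IsFiniteMeasure ν] (A T H : Set ℝ) (hA : MeasurableSet A)
    (hH : MeasurableSet H) (hTA : ν T = ν A)
    (hTup : ∀ s t : ℝ, s ≤ t → s ∈ T → t ∈ T) (hHup : ∀ s t : ℝ, s ≤ t → s ∈ H → t ∈ H) :
    ν (T \ H) + min (ν (A \ H)) (ν (H \ A)) ≤ ν (A \ H) := by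
  by_cases h : T ⊆ H
  · rw [sdiff_eq_empty.mpr h, measure_empty, zero_add]
    exact min_le_left _ _
  · have hHT : H ⊆ T := by
      obtain ⟨s, hsT, hsH⟩ := not_subset.mp h
      intro t ht
      rcases le_total s t with hst | hst
      · exact hTup s t hst hsT
      · exact absurd (hHup t s hst ht) hsH
    refine (add_le_add_right (min_le_right _ _) _).trans ?_
    have h1 := measure_sdiff_add_inter (μ := ν) T hH
    have h2 := measure_sdiff_add_inter (μ := ν) H hA
    have h3 := measure_sdiff_add_inter (μ := ν) A hH
    rw [inter_eq_self_of_subset_right hHT] at h1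
    rw [inter_comm] at h2
    have hfin : ν (A ∩ H) ≠ ⊤ := measure_ne_top _ _
    refine (ENNReal.add_le_add_iff_right hfin).mp ?_
    rw [add_assoc, h2, h1, h3, hTA]

/-- Symmetrizing in a direction `w` with `⟪w, v⟫ ≥ 0` preserves the mass, and brings `F` closer to
any half-space `H` in direction `v` by a quantified amount. -/
lemma symm_gain {n : ℕ} (f : En n → ℝ) (g : En n → ℝ≥0∞) (hg : Measurable g)
    (hgf : ∫⁻ x, g x ≠ ⊤)
    (hfg : g =ᵐ[volume] fun x => ENNReal.ofReal (f x)) (v w : En n) (hw : ‖w‖ = 1)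
    (hwv : 0 ≤ ⟪w, v⟫)
    (F H : Set (En n)) (hF : MeasurableSet F) (hH : MeasurableSet H)
    (hHup : ∀ x y, ⟪x, v⟫ ≤ ⟪y, v⟫ → x ∈ H → y ∈ H) :
    ∃ S : Set (En n), MeasurableSet S ∧ S =ᵐ[volume] ehrhardSymm f w F ∧
      (volume.withDensity g) S = (volume.withDensity g) F ∧
      (volume.withDensity g) (S \ H) + ∫⁻ x, wt ⟪x, w⟫ *
        min (∫⁻ t : ℝ, (F \ H).indicator g (x + t • w)) (∫⁻ t : ℝ, (H \ F).indicator g (x + t • w))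
        ≤ (volume.withDensity g) (F \ H) := by
  obtain ⟨S, hS, hSe⟩ := symm_nullMeasurable f g hg hfg w hw F hF
  have hSe' : ∀ᵐ x, (x ∈ S ↔ x ∈ ehrhardSymm f w F) := hSe.mem_iff.mono fun x hx => hx.symm
  have hlines : ∀ᵐ x : En n, IsFiniteMeasure
      ((volume : Measure ℝ).withDensity fun t => g (x + t • w)) ∧
      ((volume : Measure ℝ).withDensity fun t => g (x + t • w)) {t | x + t • w ∈ S} =
      ((volume : Measure ℝ).withDensity fun t => g (x + t • w)) {t | x + t • w ∈ F} ∧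
      ((volume : Measure ℝ).withDensity fun t => g (x + t • w)) {t | x + t • w ∈ S \ H} +
      min (((volume : Measure ℝ).withDensity fun t => g (x + t • w)) {t | x + t • w ∈ F \ H})
       (((volume : Measure ℝ).withDensity fun t => g (x + t • w)) {t | x + t • w ∈ H \ F}) ≤
       ((volume : Measure ℝ).withDensity fun t => g (x + t • w)) {t | x + t • w ∈ F \ H} := by
    filter_upwards [symm_fiber f g hg hgf hfg w hw F, ae_lines w hw hSe',
      ae_lines_lt_top w hw g hg hgf] with x hx hxS hfin
    have hfinm : IsFiniteMeasure ((volume : Measure ℝ).withDensity fun t => g (x + t • w)) :=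
      isFiniteMeasure_withDensity hfin.ne
    have hline : Measurable fun t : ℝ => x + t • w := by fun_prop
    have hST : {t : ℝ | x + t • w ∈ S} =ᵐ[(volume : Measure ℝ).withDensity fun t => g (x + t • w)]
        {t : ℝ | x + t • w ∈ ehrhardSymm f w F} := by
      apply (withDensity_absolutelyContinuous (volume : Measure ℝ) _).ae_eq
      filter_upwards [hxS] with t ht
      exact propext ht
    refine ⟨hfinm, (measure_congr hST).trans hx.2.1, ?_⟩
    have hd : ((volume : Measure ℝ).withDensity fun t => g (x + t • w)) {t | x + t • w ∈ S \ H}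
       = ((volume : Measure ℝ).withDensity fun t => g (x + t • w))
         ({t | x + t • w ∈ ehrhardSymm f w F} \ {t | x + t • w ∈ H}) :=
      measure_congr (hST.diff (ae_eq_refl _))
    rw [hd]
    refine gain_fiber _ {t : ℝ | x + t • w ∈ F} _ {t : ℝ | x + t • w ∈ H} (hline hF) (hline hH)
      hx.2.1 hx.2.2 ?_
    intro s t hst hs
    refine hHup _ _ ?_ hs
    rw [inner_add_left, inner_add_left, real_inner_smul_left, real_inner_smul_left]
    have := mul_le_mul_of_nonneg_right hst hwv
    linarith
  refine ⟨S, hS, hSe.symm, ?_, ?_⟩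
  · rw [mass_lines g hg w hw hS, mass_lines g hg w hw hF]
    refine lintegral_congr_ae ?_
    filter_upwards [hlines] with x hx
    rw [hx.2.1]
  · rw [mass_lines g hg w hw (hS.diff hH), mass_lines g hg w hw (hF.diff hH)]
    have hmm : ∀ B : Set (En n), MeasurableSet B →
        Measurable (fun z : En n => ∫⁻ t : ℝ, B.indicator g (z + t • w)) := by
      intro B hB
      have h1 : Measurable (B.indicator g) := hg.indicator hB
      exact (by fun_prop : Measurable
        (fun q : En n × ℝ => B.indicator g (q.1 + q.2 • w))).lintegral_prod_right'
    have hwt := measurable_wt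
    have hwt2 : Measurable fun x : En n => wt ⟪x, w⟫ := by fun_prop
    rw [← lintegral_add_right]
    · refine lintegral_mono_ae ?_
      filter_upwards [hlines] with x hx
      rw [← mul_add]
      refine mul_le_mul_right ?_ _
      have := hx.2.2
      rwa [← fiber_apply g x w (hF.diff hH), ← fiber_apply g x w (hH.diff hF)]
    · exact hwt2.mul ((hmm _ (hF.diff hH)).min (hmm _ (hH.diff hF)))

/-! ### Pairs of points and directional gains -/

lemma lintegral_comp_smul_pos {G : Type*} [NormedAddCommGroup G] [NormedSpace ℝ G]
    [MeasurableSpace G] [BorelSpace G] [FiniteDimensional ℝ G] (μ : Measure G) [μ.IsAddHaarMeasure]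
    (h : G → ℝ≥0∞) (hh : Measurable h) (c : ℝ) (hc : 0 < c) :
    ENNReal.ofReal (c ^ Module.finrank ℝ G) * ∫⁻ z, h (c • z) ∂μ = ∫⁻ z, h z ∂μ := by
  have h1 := Measure.map_addHaar_smul μ hc.ne'
  have h2 : ∫⁻ z, h (c • z) ∂μ = ∫⁻ z, h z ∂(Measure.map (c • ·) μ) := by
    rw [lintegral_map hh (measurable_const_smul c)]
  have hpos : 0 < c ^ Module.finrank ℝ G := by positivity
  rw [h2, h1, lintegral_smul_measure, smul_eq_mul, ← mul_assoc, ← ENNReal.ofReal_mul hpos.le,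
    abs_of_pos (inv_pos.mpr hpos), mul_inv_cancel₀ hpos.ne', ENNReal.ofReal_one, one_mul]

lemma lintegral_line_smul {n : ℕ} (g : En n → ℝ≥0∞) (hg : Measurable g) (x z : En n) (c : ℝ)
    (hc : 0 < c) :
    ENNReal.ofReal c * ∫⁻ t : ℝ, g (x + t • (c • z)) = ∫⁻ t : ℝ, g (x + t • z) := by
  have := lintegral_comp_smul_pos (volume : Measure ℝ) (fun t : ℝ => g (x + t • z))
    (by fun_prop) c hc
  rw [Module.finrank_self, pow_one] at this
  rw [← this]
  simp only [smul_smul, smul_eq_mul, mul_comm c]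

/-- Pairs `(x, z)`, standing for the points `x` and `x + z`, at distance at most `j` and such that
the mass of `g` along the line `t ↦ x + t • z` through both, with respect to the parameter `t`, is
at most `j`. -/
def goodPairs {n : ℕ} (g : En n → ℝ≥0∞) (j : ℕ) : Set (En n × En n) :=
  {p | ‖p.2‖ ≤ j ∧ ∫⁻ t : ℝ, g (p.1 + t • p.2) ≤ j}

lemma measurable_lineMass {n : ℕ} (g : En n → ℝ≥0∞) (hg : Measurable g) :
    Measurable fun p : En n × En n => ∫⁻ t : ℝ, g (p.1 + t • p.2) :=
  (by fun_prop : Measurable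
    (fun q : (En n × En n) × ℝ => g (q.1.1 + q.2 • q.1.2))).lintegral_prod_right'

lemma measurableSet_goodPairs {n : ℕ} (g : En n → ℝ≥0∞) (hg : Measurable g) (j : ℕ) :
    MeasurableSet (goodPairs g j) := by
  have h1 : MeasurableSet {p : En n × En n | ‖p.2‖ ≤ j} :=
    measurableSet_le (by fun_prop) measurable_const
  exact h1.inter (measurableSet_le (measurable_lineMass g hg) measurable_const)

/-- Pairs of points of `a × b` on lines in the fixed direction `z` of controlled mass, estimated by
the gain `δ`: on each line the product of the two masses is their minimum times their maximum. -/
lemma pair_direction {n : ℕ} (a b g : En n → ℝ≥0∞) (ha : Measurable a) (hb : Measurable b)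
    (hg : Measurable g) (hag : ∀ x, a x ≤ g x) (hbg : ∀ x, b x ≤ g x) (M δ : ℝ≥0∞)
    (z : En n) (hz : z ≠ 0)
    (hδ : ∫⁻ x, wt ⟪x, ‖z‖⁻¹ • z⟫ * min (∫⁻ t : ℝ, a (x + t • (‖z‖⁻¹ • z)))
      (∫⁻ t : ℝ, b (x + t • (‖z‖⁻¹ • z))) ≤ δ) :
    ∫⁻ x, {y | ∫⁻ t : ℝ, g (y + t • z) ≤ M}.indicator
      (fun y => a y * ∫⁻ t : ℝ, b (y + t • z)) x ≤ M * δ := by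
  set w := ‖z‖⁻¹ • z with hwdef
  have hnz : 0 < ‖z‖ := norm_pos_iff.mpr hz
  have hw : ‖w‖ = 1 := norm_smul_inv_norm hz
  have hzw : z = ‖z‖ • w := by rw [hwdef, smul_smul, mul_inv_cancel₀ hnz.ne', one_smul]
  have hLm : ∀ h : En n → ℝ≥0∞, Measurable h →
      Measurable fun y : En n => ∫⁻ t : ℝ, h (y + t • z) := by
    intro h hh
    exact (by fun_prop : Measurable
      (fun q : En n × ℝ => h (q.1 + q.2 • z))).lintegral_prod_right'
  have hset : MeasurableSet {y : En n | ∫⁻ t : ℝ, g (y + t • z) ≤ M} :=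
    measurableSet_le (hLm g hg) measurable_const
  have hinv : ∀ (h : En n → ℝ≥0∞) (x : En n) (s : ℝ),
      ∫⁻ t : ℝ, h (x + s • w + t • z) = ∫⁻ t : ℝ, h (x + t • z) := by
    intro h x s
    rw [← lintegral_add_left_eq_self (fun t : ℝ => h (x + t • z)) (s * ‖z‖⁻¹)]
    refine lintegral_congr fun t => ?_
    rw [add_smul, hwdef, smul_smul, add_assoc]
  have hprodm : Measurable fun y => a y * ∫⁻ t : ℝ, b (y + t • z) := ha.mul (hLm b hb)
  rw [← lintegral_lines w hw _ (hprodm.indicator hset)]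
  have hstep : ∀ x : En n, wt ⟪x, w⟫ * (∫⁻ s : ℝ, {y | ∫⁻ t : ℝ, g (y + t • z) ≤ M}.indicator
      (fun y => a y * ∫⁻ t : ℝ, b (y + t • z)) (x + s • w)) ≤
      M * (wt ⟪x, w⟫ * min (∫⁻ t : ℝ, a (x + t • w)) (∫⁻ t : ℝ, b (x + t • w))) := by
    intro x
    by_cases hx : ∫⁻ t : ℝ, g (x + t • z) ≤ M
    · have h1 : ∫⁻ s : ℝ, {y | ∫⁻ t : ℝ, g (y + t • z) ≤ M}.indicator
          (fun y => a y * ∫⁻ t : ℝ, b (y + t • z)) (x + s • w)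
          = (∫⁻ s : ℝ, a (x + s • w)) * ∫⁻ t : ℝ, b (x + t • z) := by
        rw [← lintegral_mul_const _ (by fun_prop)]
        refine lintegral_congr fun s => ?_
        rw [indicator_of_mem (by simpa only [mem_ofPred_eq, hinv] using hx), hinv]
      have hA := lintegral_line_smul a ha x w ‖z‖ hnz
      have hB := lintegral_line_smul b hb x w ‖z‖ hnz
      rw [← hzw] at hA hB
      have hAM : ∫⁻ t : ℝ, a (x + t • z) ≤ M := (lintegral_mono fun t => hag _).trans hx
      have hBM : ∫⁻ t : ℝ, b (x + t • z) ≤ M := (lintegral_mono fun t => hbg _).trans hx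
      have hprod : (∫⁻ s : ℝ, a (x + s • w)) * ∫⁻ t : ℝ, b (x + t • z) ≤
          M * min (∫⁻ t : ℝ, a (x + t • w)) (∫⁻ t : ℝ, b (x + t • w)) := by
        rcases le_total (∫⁻ t : ℝ, a (x + t • w)) (∫⁻ t : ℝ, b (x + t • w)) with h | h
        · rw [min_eq_left h, mul_comm]
          exact mul_le_mul_left hBM _
        · rw [min_eq_right h, ← hA, ← hB, mul_right_comm, mul_comm M]
          exact mul_le_mul_right hAM _
      rw [h1, mul_left_comm M]
      exact mul_le_mul_right hprod _
    · have h1 : ∫⁻ s : ℝ, {y | ∫⁻ t : ℝ, g (y + t • z) ≤ M}.indicator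
          (fun y => a y * ∫⁻ t : ℝ, b (y + t • z)) (x + s • w) = 0 := by
        rw [lintegral_eq_zero_of_ae_eq_zero]
        refine Eventually.of_forall fun s => ?_
        exact indicator_of_notMem (by simpa only [mem_ofPred_eq, hinv] using hx) _
      rw [h1, mul_zero]
      exact zero_le
  refine (lintegral_mono hstep).trans ?_
  have hwt := measurable_wt
  have hmm : ∀ h : En n → ℝ≥0∞, Measurable h →
      Measurable (fun z : En n => ∫⁻ t : ℝ, h (z + t • w)) := by
    intro h hh
    exact (by fun_prop : Measurable
      (fun q : En n × ℝ => h (q.1 + q.2 • w))).lintegral_prod_right'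
  rw [lintegral_const_mul]
  · exact mul_le_mul_right hδ _
  · exact (by fun_prop : Measurable fun x : En n => wt ⟪x, w⟫).mul ((hmm a ha).min (hmm b hb))

/-- The measure of the good pairs in `a × b` is controlled by the directional gains. Instead of
polar coordinates, the substitution `z = τ ζ` averaged over `τ ∈ [1, 2]` is used to integrate
along lines. -/
lemma pair_estimate {n : ℕ} (a b g : En n → ℝ≥0∞) (ha : Measurable a) (hb : Measurable b)
    (hg : Measurable g) (hag : ∀ x, a x ≤ g x) (hbg : ∀ x, b x ≤ g x) (δ : ℝ≥0∞) (v : En n)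
    (hab : ∀ x z, a x * b (x + z) ≠ 0 → 0 < ⟪z, v⟫)
    (hδ : ∀ w : En n, ‖w‖ = 1 → 0 ≤ ⟪w, v⟫ → ∫⁻ x, wt ⟪x, w⟫ *
      min (∫⁻ t : ℝ, a (x + t • w)) (∫⁻ t : ℝ, b (x + t • w)) ≤ δ) (j : ℕ) (hn : 0 < n) :
    ∫⁻ z, ∫⁻ x, (goodPairs g j).indicator (fun p => a p.1 * b (p.1 + p.2)) (x, z) ≤
      ENNReal.ofReal (2 ^ n) * (((2 * j : ℝ≥0∞) * δ) * volume (Metric.closedBall (0 : En n) j)) := by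
  set Ψ : En n × En n → ℝ≥0∞ := (goodPairs g j).indicator (fun p => a p.1 * b (p.1 + p.2)) with hΨ
  have hΨm : Measurable Ψ := Measurable.indicator (by fun_prop) (measurableSet_goodPairs g hg j)
  have hΨz : Measurable fun z : En n => ∫⁻ x, Ψ (x, z) := hΨm.lintegral_prod_left'
  have hfr : Module.finrank ℝ (En n) = n := finrank_euclideanSpace_fin
  have hτ : ∀ τ ∈ Icc (1 : ℝ) 2, ∫⁻ z, ∫⁻ x, Ψ (x, z) ≤
      ENNReal.ofReal (2 ^ n) * ∫⁻ z, ∫⁻ x, Ψ (x, τ • z) := by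
    intro τ h
    have h0 : (0 : ℝ) < τ := by linarith [h.1]
    rw [← lintegral_comp_smul_pos volume _ hΨz τ h0, hfr]
    refine mul_le_mul_left (ENNReal.ofReal_le_ofReal ?_) _
    exact pow_le_pow_left₀ h0.le h.2 n
  have havg : ∫⁻ z, ∫⁻ x, Ψ (x, z) ≤
      ∫⁻ τ in Icc (1 : ℝ) 2, ENNReal.ofReal (2 ^ n) * ∫⁻ z, ∫⁻ x, Ψ (x, τ • z) := by
    have : ∫⁻ z, ∫⁻ x, Ψ (x, z) = ∫⁻ τ in Icc (1 : ℝ) 2, (∫⁻ z, ∫⁻ x, Ψ (x, z)) := by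
      rw [lintegral_const, Measure.restrict_apply_univ, Real.volume_Icc]
      norm_num
    rw [this]
    exact setLIntegral_mono' measurableSet_Icc hτ
  refine havg.trans ?_
  have hΨ2 : Measurable fun q : (ℝ × En n) × En n => Ψ (q.2, q.1.1 • q.1.2) :=
    hΨm.comp (by fun_prop)
  have hΨ3 : Measurable fun q : ℝ × En n => ∫⁻ x, Ψ (x, q.1 • q.2) := hΨ2.lintegral_prod_right'
  rw [lintegral_const_mul _ hΨ3.lintegral_prod_right']
  refine mul_le_mul_right ?_ _
  rw [lintegral_lintegral_swap hΨ3.aemeasurable]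
  have hpt : ∀ z : En n, z ≠ 0 → ∫⁻ τ in Icc (1 : ℝ) 2, ∫⁻ x, Ψ (x, τ • z) ≤
      (Metric.closedBall (0 : En n) j).indicator (fun _ => (2 * j : ℝ≥0∞) * δ) z := by
    intro z hz
    by_cases hzero : ∀ τ ∈ Icc (1 : ℝ) 2, ∀ x, Ψ (x, τ • z) = 0
    · have : ∫⁻ τ in Icc (1 : ℝ) 2, ∫⁻ x, Ψ (x, τ • z) = 0 := by
        rw [setLIntegral_congr_fun (g := fun _ => 0) measurableSet_Icc]
        · simp
        · intro τ h
          simp only [hzero τ h, lintegral_zero]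
      rw [this]; exact zero_le
    push Not at hzero
    obtain ⟨τ₀, hτ₀, x₀, hne⟩ := hzero
    have h0 : (0 : ℝ) < τ₀ := by linarith [hτ₀.1]
    have hmem : (x₀, τ₀ • z) ∈ goodPairs g j := mem_of_indicator_ne_zero hne
    rw [hΨ, indicator_of_mem hmem] at hne
    have hzv : 0 < ⟪z, v⟫ := by
      have := hab x₀ (τ₀ • z) hne
      rw [real_inner_smul_left] at this
      exact pos_of_mul_pos_right this h0.le
    have hzj : ‖z‖ ≤ j := by
      have h1 : ‖τ₀ • z‖ ≤ j := hmem.1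
      rw [norm_smul, Real.norm_of_nonneg h0.le] at h1
      nlinarith [norm_nonneg z, hτ₀.1]
    rw [indicator_of_mem (by simpa using hzj)]
    have hnz : 0 < ‖z‖ := norm_pos_iff.mpr hz
    refine le_trans ?_ (pair_direction a b g ha hb hg hag hbg (2 * j) δ z hz
      (hδ _ (norm_smul_inv_norm hz) ?_))
    swap
    · rw [real_inner_smul_left]; positivity
    calc ∫⁻ τ in Icc (1 : ℝ) 2, ∫⁻ x, Ψ (x, τ • z)
        ≤ ∫⁻ τ in Icc (1 : ℝ) 2, ∫⁻ x, {y | ∫⁻ t : ℝ, g (y + t • z) ≤ 2 * j}.indicator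
            (fun y => a y * b (y + τ • z)) x := by
          refine setLIntegral_mono' measurableSet_Icc fun τ h => lintegral_mono fun x => ?_
          have h0 : (0 : ℝ) < τ := by linarith [h.1]
          by_cases hg' : (x, τ • z) ∈ goodPairs g j
          · have h2 : ∫⁻ t : ℝ, g (x + t • z) ≤ 2 * j := by
              rw [← lintegral_line_smul g hg x z τ h0]
              refine mul_le_mul' ?_ hg'.2
              rw [← ENNReal.ofReal_ofNat]
              exact ENNReal.ofReal_le_ofReal h.2
            rw [hΨ, indicator_of_mem hg', indicator_of_mem (by exact h2)]
          · rw [hΨ, indicator_of_notMem hg']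
            exact zero_le
      _ ≤ ∫⁻ τ : ℝ, ∫⁻ x, {y | ∫⁻ t : ℝ, g (y + t • z) ≤ 2 * j}.indicator
            (fun y => a y * b (y + τ • z)) x := setLIntegral_le_lintegral _ _
      _ = ∫⁻ x, ∫⁻ τ : ℝ, {y | ∫⁻ t : ℝ, g (y + t • z) ≤ 2 * j}.indicator
            (fun y => a y * b (y + τ • z)) x := by
          rw [lintegral_lintegral_swap]
          have hs : MeasurableSet {q : ℝ × En n | ∫⁻ t : ℝ, g (q.2 + t • z) ≤ 2 * j} := by
            refine measurableSet_le ?_ measurable_const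
            exact (measurable_lineMass g hg).comp
              (by fun_prop : Measurable fun q : ℝ × En n => (q.2, z))
          exact (Measurable.indicator (by fun_prop :
            Measurable fun q : ℝ × En n => a q.2 * b (q.2 + q.1 • z)) hs).aemeasurable
      _ = ∫⁻ x, {y | ∫⁻ t : ℝ, g (y + t • z) ≤ 2 * j}.indicator
            (fun y => a y * ∫⁻ t : ℝ, b (y + t • z)) x := by
          refine lintegral_congr fun x => ?_
          by_cases hx : x ∈ {y : En n | ∫⁻ t : ℝ, g (y + t • z) ≤ 2 * j}
          · simp only [indicator_of_mem hx]
            rw [lintegral_const_mul _ (by fun_prop)]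
          · simp only [indicator_of_notMem hx, lintegral_zero]
  have : Nonempty (Fin n) := ⟨⟨0, hn⟩⟩
  have hae : ∀ᵐ z : En n, z ≠ 0 := by
    have : Nontrivial (En n) := inferInstance
    exact Measure.ae_ne volume 0
  refine (lintegral_mono_ae (hae.mono hpt)).trans ?_
  rw [lintegral_indicator Metric.isClosed_closedBall.measurableSet, setLIntegral_const]

/-! ### Approximation of the half-space -/

lemma lintegral_pairs {n : ℕ} (a b : En n → ℝ≥0∞) (ha : Measurable a) (hb : Measurable b) :
    ∫⁻ z, ∫⁻ x, a x * b (x + z) = (∫⁻ x, a x) * ∫⁻ x, b x := by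
  rw [lintegral_lintegral_swap]
  · rw [← lintegral_mul_const _ ha]
    refine lintegral_congr fun x => ?_
    rw [lintegral_const_mul _ (by fun_prop), lintegral_add_left_eq_self b]
  · exact (by fun_prop : Measurable fun q : En n × En n => a q.2 * b (q.2 + q.1)).aemeasurable

/-- The pairs that are not good have small mass: a line carries finite mass for almost all pairs. -/
lemma tendsto_badPairs {n : ℕ} (hn : 0 < n) (g : En n → ℝ≥0∞) (hg : Measurable g)
    (hgf : ∫⁻ x, g x ≠ ⊤) :
    Tendsto (fun j : ℕ => ∫⁻ z, ∫⁻ x, (goodPairs g j)ᶜ.indicator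
      (fun p => g p.1 * g (p.1 + p.2)) (x, z)) atTop (𝓝 0) := by
  have hG : Measurable fun p : En n × En n => g p.1 * g (p.1 + p.2) := by fun_prop
  set ρ : Measure (En n × En n) :=
    (volume.prod volume).withDensity fun p => g p.1 * g (p.1 + p.2) with hρ
  have hρs : ∀ s, MeasurableSet s → ρ s = ∫⁻ z, ∫⁻ x, s.indicator
      (fun p => g p.1 * g (p.1 + p.2)) (x, z) := by
    intro s hs
    rw [hρ, withDensity_apply _ hs, ← lintegral_indicator hs,
      lintegral_prod_symm' _ (hG.indicator hs)]
  have hfin : ρ univ ≠ ⊤ := by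
    rw [hρs _ MeasurableSet.univ]
    simp only [indicator_univ]
    rw [lintegral_pairs g g hg hg]
    exact ENNReal.mul_ne_top hgf hgf
  have hcm : ∀ j, MeasurableSet (goodPairs g j)ᶜ := fun j => (measurableSet_goodPairs g hg j).compl
  have hanti : Antitone fun j : ℕ => (goodPairs g j)ᶜ := by
    intro i j hij
    refine compl_subset_compl.mpr fun p hp => ⟨hp.1.trans ?_, hp.2.trans ?_⟩
    · exact_mod_cast hij
    · exact_mod_cast hij
  have ht : Tendsto (fun j => ρ (goodPairs g j)ᶜ) atTop (𝓝 (ρ (⋂ j, (goodPairs g j)ᶜ))) :=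
    tendsto_measure_iInter_atTop (fun j => (hcm j).nullMeasurableSet) hanti
      ⟨0, ne_top_of_le_ne_top hfin (measure_mono (subset_univ _))⟩
  have hsub : (⋂ j, (goodPairs g j)ᶜ) ⊆ {p | ∫⁻ t : ℝ, g (p.1 + t • p.2) = ⊤} := by
    intro p hp
    by_contra hc
    have hc' : ∫⁻ t : ℝ, g (p.1 + t • p.2) ≠ ⊤ := hc
    obtain ⟨k, hk⟩ := ENNReal.exists_nat_gt hc'
    obtain ⟨l, hl⟩ := exists_nat_ge ‖p.2‖
    refine (mem_iInter.mp hp (max k l)) ⟨hl.trans ?_, hk.le.trans ?_⟩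
    · exact_mod_cast le_max_right k l
    · exact_mod_cast le_max_left k l
  have hnull : ρ (⋂ j, (goodPairs g j)ᶜ) = 0 := by
    refine measure_mono_null hsub ?_
    have hms : MeasurableSet {p : En n × En n | ∫⁻ t : ℝ, g (p.1 + t • p.2) = ⊤} :=
      measurable_lineMass g hg (measurableSet_singleton ⊤)
    rw [hρs _ hms]
    have : Nonempty (Fin n) := ⟨⟨0, hn⟩⟩
    have hae : ∀ᵐ z : En n, z ≠ 0 := by
      have : Nontrivial (En n) := inferInstance
      exact Measure.ae_ne volume 0
    rw [lintegral_eq_zero_of_ae_eq_zero]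
    filter_upwards [hae] with z hz
    have hnz : 0 < ‖z‖ := norm_pos_iff.mpr hz
    refine lintegral_eq_zero_of_ae_eq_zero ?_
    filter_upwards [ae_lines_lt_top (‖z‖⁻¹ • z) (norm_smul_inv_norm hz) g hg hgf] with x hx
    refine indicator_of_notMem ?_ _
    intro hmem
    have hmem' : ∫⁻ t : ℝ, g (x + t • z) = ⊤ := hmem
    have := lintegral_line_smul g hg x z ‖z‖⁻¹ (inv_pos.mpr hnz)
    rw [hmem'] at this
    exact (ENNReal.mul_lt_top ENNReal.ofReal_lt_top hx).ne this
  rw [hnull] at ht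
  simpa only [hρs _ (hcm _)] using ht

/-- A class of sets of the same mass as the half-space `H`, in which every set can be improved by
the directional gains of `symm_gain`, contains sets arbitrarily close to `H`. -/
lemma exists_close {n : ℕ} (hn : 0 < n) (g : En n → ℝ≥0∞) (hg : Measurable g)
    (hgf : ∫⁻ x, g x ≠ ⊤) (v : En n) (H : Set (En n)) (hH : MeasurableSet H)
    (hHup : ∀ x y, ⟪x, v⟫ ≤ ⟪y, v⟫ → x ∈ H → y ∈ H)
    (C : Set (Set (En n))) (hne : C.Nonempty)
    (hCm : ∀ F ∈ C, MeasurableSet F ∧ (volume.withDensity g) F = (volume.withDensity g) H)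
    (hC : ∀ F ∈ C, ∀ w : En n, ‖w‖ = 1 → 0 ≤ ⟪w, v⟫ → ∃ S ∈ C,
      (volume.withDensity g) (S \ H) + ∫⁻ x, wt ⟪x, w⟫ *
        min (∫⁻ t : ℝ, (F \ H).indicator g (x + t • w)) (∫⁻ t : ℝ, (H \ F).indicator g (x + t • w))
        ≤ (volume.withDensity g) (F \ H))
    (ε : ℝ≥0∞) (hε : 0 < ε) :
    ∃ F ∈ C, (volume.withDensity g) (F \ H) < ε := by
  set μ := volume.withDensity g with hμ
  have hfinμ : IsFiniteMeasure μ := isFiniteMeasure_withDensity hgf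
  set d : ℝ≥0∞ := ⨅ F ∈ C, μ (F \ H) with hd
  suffices hd0 : d = 0 by
    by_contra hcon
    push Not at hcon
    have : ε ≤ d := le_iInf₂ hcon
    rw [hd0] at this
    exact absurd hε (not_lt.mpr this)
  have hdle : ∀ F ∈ C, d ≤ μ (F \ H) := fun F hF => iInf₂_le F hF
  have hdfin : d ≠ ⊤ := by
    obtain ⟨F, hF⟩ := hne
    exact ne_top_of_le_ne_top (measure_ne_top μ (F \ H)) (hdle F hF)
  have hkey : ∀ j : ℕ, ∀ F ∈ C, d * d ≤
      ENNReal.ofReal (2 ^ n) * (((2 * j : ℝ≥0∞) * (μ (F \ H) - d)) *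
        volume (Metric.closedBall (0 : En n) j)) +
      ∫⁻ z, ∫⁻ x, (goodPairs g j)ᶜ.indicator (fun p => g p.1 * g (p.1 + p.2)) (x, z) := by
    intro j F hF
    obtain ⟨hFm, hFH⟩ := hCm F hF
    have hsym : μ (H \ F) = μ (F \ H) := by
      have h1 := measure_sdiff_add_inter (μ := μ) F hH
      have h2 := measure_sdiff_add_inter (μ := μ) H hFm
      rw [inter_comm] at h2
      rw [hFH, ← h2] at h1
      exact ((ENNReal.add_left_inj (measure_ne_top μ _)).mp h1).symm
    set a := (F \ H).indicator g with ha
    set b := (H \ F).indicator g with hb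
    have ham : Measurable a := hg.indicator (hFm.diff hH)
    have hbm : Measurable b := hg.indicator (hH.diff hFm)
    have hag : ∀ x, a x ≤ g x := fun x => indicator_le_self' (fun _ _ => zero_le) x
    have hbg : ∀ x, b x ≤ g x := fun x => indicator_le_self' (fun _ _ => zero_le) x
    have hia : ∫⁻ x, a x = μ (F \ H) := by
      rw [hμ, withDensity_apply _ (hFm.diff hH), ← lintegral_indicator (hFm.diff hH)]
    have hib : ∫⁻ x, b x = μ (F \ H) := by
      rw [← hsym, hμ, withDensity_apply _ (hH.diff hFm), ← lintegral_indicator (hH.diff hFm)]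
    have hab : ∀ x z, a x * b (x + z) ≠ 0 → 0 < ⟪z, v⟫ := by
      intro x z h
      have hx : x ∈ F \ H := mem_of_indicator_ne_zero (left_ne_zero_of_mul h)
      have hz : x + z ∈ H \ F := mem_of_indicator_ne_zero (right_ne_zero_of_mul h)
      by_contra hc
      refine hx.2 (hHup _ _ ?_ hz.1)
      rw [inner_add_left]
      linarith
    have hδ : ∀ w : En n, ‖w‖ = 1 → 0 ≤ ⟪w, v⟫ → ∫⁻ x, wt ⟪x, w⟫ *
      min (∫⁻ t : ℝ, a (x + t • w)) (∫⁻ t : ℝ, b (x + t • w)) ≤ μ (F \ H) - d := by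
      intro w hw hwv
      obtain ⟨S, hS, hle⟩ := hC F hF w hw hwv
      refine ENNReal.le_sub_of_add_le_left hdfin ?_
      exact (add_le_add_left (hdle S hS) _).trans hle
    have hest := pair_estimate a b g ham hbm hg hag hbg (μ (F \ H) - d) v hab hδ j hn
    calc d * d ≤ μ (F \ H) * μ (F \ H) := mul_le_mul' (hdle F hF) (hdle F hF)
      _ = ∫⁻ z, ∫⁻ x, a x * b (x + z) := by rw [lintegral_pairs a b ham hbm, hia, hib]
      _ ≤ ∫⁻ z, ((∫⁻ x, (goodPairs g j).indicator (fun p => a p.1 * b (p.1 + p.2)) (x, z)) +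
            ∫⁻ x, (goodPairs g j)ᶜ.indicator (fun p => g p.1 * g (p.1 + p.2)) (x, z)) := by
          refine lintegral_mono fun z => ?_
          have hm : Measurable fun x : En n =>
              (goodPairs g j)ᶜ.indicator (fun p => g p.1 * g (p.1 + p.2)) (x, z) :=
            (Measurable.indicator (by fun_prop) (measurableSet_goodPairs g hg j).compl).comp
              (by fun_prop : Measurable fun x : En n => (x, z))
          rw [← lintegral_add_right _ hm]
          refine lintegral_mono fun x => ?_
          by_cases hx : (x, z) ∈ goodPairs g j
          · simp only [indicator_of_mem hx, indicator_of_notMem (notMem_compl_iff.mpr hx), add_zero,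
              le_refl]
          · simp only [indicator_of_notMem hx, indicator_of_mem (mem_compl hx), zero_add]
            exact mul_le_mul' (hag _) (hbg _)
      _ = (∫⁻ z, ∫⁻ x, (goodPairs g j).indicator (fun p => a p.1 * b (p.1 + p.2)) (x, z)) +
            ∫⁻ z, ∫⁻ x, (goodPairs g j)ᶜ.indicator (fun p => g p.1 * g (p.1 + p.2)) (x, z) := by
          rw [lintegral_add_right]
          exact (Measurable.indicator (by fun_prop)
            (measurableSet_goodPairs g hg j).compl).lintegral_prod_left'
      _ ≤ _ := add_le_add_left hest _
  have hdj : ∀ j : ℕ, d * d ≤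
      ∫⁻ z, ∫⁻ x, (goodPairs g j)ᶜ.indicator (fun p => g p.1 * g (p.1 + p.2)) (x, z) := by
    intro j
    -- let the excess `μ (F \ H) - d` tend to zero
    have hlim : Tendsto (fun k : ℕ => ENNReal.ofReal (2 ^ n) *
        (((2 * j : ℝ≥0∞) * ((k : ℝ≥0∞) + 1)⁻¹) * volume (Metric.closedBall (0 : En n) j)) +
      ∫⁻ z, ∫⁻ x, (goodPairs g j)ᶜ.indicator (fun p => g p.1 * g (p.1 + p.2)) (x, z)) atTop
      (𝓝 (ENNReal.ofReal (2 ^ n) *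
        (((2 * j : ℝ≥0∞) * 0) * volume (Metric.closedBall (0 : En n) j)) +
      ∫⁻ z, ∫⁻ x, (goodPairs g j)ᶜ.indicator (fun p => g p.1 * g (p.1 + p.2)) (x, z))) := by
      have h0 : Tendsto (fun k : ℕ => ((k : ℝ≥0∞) + 1)⁻¹) atTop (𝓝 0) := by
        have := (tendsto_add_atTop_iff_nat 1).mpr ENNReal.tendsto_inv_nat_nhds_zero
        simpa using this
      refine Tendsto.add ?_ tendsto_const_nhds
      refine ENNReal.Tendsto.const_mul ?_ (Or.inr ENNReal.ofReal_ne_top)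
      refine ENNReal.Tendsto.mul_const ?_ (Or.inr measure_closedBall_lt_top.ne)
      exact ENNReal.Tendsto.const_mul h0 (Or.inr (by finiteness))
    rw [mul_zero, zero_mul, mul_zero, zero_add] at hlim
    refine ge_of_tendsto' hlim fun k => ?_
    have hlt : d < d + ((k : ℝ≥0∞) + 1)⁻¹ :=
      ENNReal.lt_add_right hdfin (ENNReal.inv_ne_zero.mpr (by finiteness))
    obtain ⟨F, hF, hlt2⟩ : ∃ F ∈ C, μ (F \ H) < d + ((k : ℝ≥0∞) + 1)⁻¹ := by
      by_contra hcon
      push Not at hcon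
      exact absurd hlt (not_lt.mpr (le_iInf₂ hcon))
    refine (hkey j F hF).trans (add_le_add_left ?_ _)
    refine mul_le_mul_right (mul_le_mul_left (mul_le_mul_right ?_ _) _) _
    exact tsub_le_iff_left.mpr hlt2.le
  have h0 : d * d ≤ 0 := ge_of_tendsto' (tendsto_badPairs hn g hg hgf) hdj
  simpa using h0

/-! ### The weak gradient on the zero set -/

lemma integrable_shear {n : ℕ} (D : En n → ℝ) (hD : Integrable D) (e : En n) (κ : Measure ℝ)
    [IsFiniteMeasure κ] :
    Integrable (fun p : ℝ × En n => D (p.2 + p.1 • e)) (κ.prod volume) := by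
  have hmp : MeasurePreserving (fun p : ℝ × En n => (p.1, p.2 + p.1 • e)) (κ.prod volume)
      (κ.prod volume) :=
    (MeasurePreserving.id κ).skew_product (g := fun s x => x + s • e)
      (by unfold Function.uncurry; fun_prop)
      (Eventually.of_forall fun s => map_add_right_eq_self volume (s • e))
  exact hmp.integrable_comp_of_integrable (hD.comp_snd κ)

/-- A function with integrable weak derivative `D` in direction `e` satisfies the fundamental theorem
of calculus along almost every segment in direction `e`. -/
lemma ae_translate_sub {n : ℕ} (f D : En n → ℝ) (e : En n) (hf : Integrable f) (hD : Integrable D)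
    (hw : ∀ ψ : En n → ℝ, ContDiff ℝ 1 ψ → HasCompactSupport ψ →
      ∫ x, f x * fderiv ℝ ψ x e = - ∫ x, ψ x * D x) (h : ℝ) (hh : 0 ≤ h) :
    ∀ᵐ x, f (x + h • e) - f x = ∫ s in Ioc 0 h, D (x + s • e) := by
  have hsh := integrable_shear D hD e (volume.restrict (Ioc 0 h))
  refine ae_eq_of_integral_contDiff_smul_eq (μ := volume)
    ((hf.comp_add_right _).sub hf).locallyIntegrable hsh.integral_prod_right.locallyIntegrable ?_
  intro ψ hψ' hψc
  have hψ : ContDiff ℝ 1 ψ := hψ'.of_le (by exact_mod_cast le_top)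
  obtain ⟨M, hM⟩ := hψc.exists_bound_of_continuous hψ.continuous
  have hdc : Continuous fun x => fderiv ℝ ψ x e :=
    (hψ.continuous_fderiv one_ne_zero).clm_apply continuous_const
  have hdcs : HasCompactSupport fun x => fderiv ℝ ψ x e := hψc.fderiv_apply ℝ e
  obtain ⟨M', hM'⟩ := hdcs.exists_bound_of_continuous hdc
  simp only [smul_eq_mul]
  -- the increments of the test function
  have hinc : ∀ x, ψ (x - h • e) - ψ x = ∫ s in Ioc 0 h, -(fderiv ℝ ψ (x - s • e) e) := by
    intro x
    rw [← intervalIntegral.integral_of_le hh]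
    have hder : ∀ s ∈ uIcc 0 h, HasDerivAt (fun s : ℝ => ψ (x - s • e))
        (-(fderiv ℝ ψ (x - s • e) e)) s := by
      intro s _
      have h1 : HasDerivAt (fun s : ℝ => x - s • e) (-e) s := by
        simpa using ((hasDerivAt_id s).smul_const e).const_sub x
      have h2 := ((hψ.differentiable one_ne_zero).differentiableAt (x := x - s • e)).hasFDerivAt
      have h3 := h2.comp_hasDerivAt s h1
      rw [map_neg] at h3
      exact h3
    rw [intervalIntegral.integral_eq_sub_of_hasDerivAt hder]
    · simp
    · exact (Continuous.intervalIntegrable (by fun_prop) _ _)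
  have hint1 : Integrable (fun x => ψ x * f (x + h • e)) :=
    (hf.comp_add_right (h • e)).bdd_mul hψ.continuous.aestronglyMeasurable
      (Eventually.of_forall hM)
  have hint2 : Integrable (fun x => ψ x * f x) :=
    hf.bdd_mul hψ.continuous.aestronglyMeasurable (Eventually.of_forall hM)
  have hint3 : Integrable (fun x => ψ (x - h • e) * f x) :=
    hf.bdd_mul (by fun_prop) (Eventually.of_forall fun x => hM _)
  calc ∫ x, ψ x * (f (x + h • e) - f x)
      = (∫ x, ψ x * f (x + h • e)) - ∫ x, ψ x * f x := by
        rw [← integral_sub hint1 hint2]; simp only [mul_sub]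
    _ = (∫ x, ψ (x - h • e) * f x) - ∫ x, ψ x * f x := by
        rw [← integral_add_right_eq_self (fun x => ψ (x - h • e) * f x) (h • e)]
        simp only [add_sub_cancel_right]
    _ = ∫ x, (∫ s in Ioc 0 h, -(fderiv ℝ ψ (x - s • e) e) * f x) := by
        rw [← integral_sub hint3 hint2]
        refine integral_congr_ae (Eventually.of_forall fun x => ?_)
        show ψ (x - h • e) * f x - ψ x * f x
          = ∫ s in Ioc 0 h, -(fderiv ℝ ψ (x - s • e) e) * f x
        rw [← sub_mul, hinc x, integral_mul_const]
    _ = ∫ s in Ioc 0 h, ∫ x, -(fderiv ℝ ψ (x - s • e) e) * f x := by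
        rw [integral_integral_swap]
        refine (hf.comp_fst (volume.restrict (Ioc 0 h))).bdd_mul (c := M') ?_ ?_
        · exact Continuous.aestronglyMeasurable
            (hdc.comp (by fun_prop : Continuous fun p : En n × ℝ => p.1 - p.2 • e)).neg
        · exact Eventually.of_forall fun p => by rw [norm_neg]; exact hM' _
    _ = ∫ s in Ioc 0 h, ∫ x, ψ x * D (x + s • e) := by
        refine integral_congr_ae (Eventually.of_forall fun s => ?_)
        have h1 := hw (fun x => ψ (x - s • e)) (by fun_prop)
          (hψc.comp_homeomorph (Homeomorph.subRight (s • e)))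
        have h2 : ∀ x, fderiv ℝ (fun x => ψ (x - s • e)) x = fderiv ℝ ψ (x - s • e) := by
          intro x; rw [fderiv_comp_sub]
        simp only [h2] at h1
        simp only [neg_mul, integral_neg]
        rw [← integral_add_right_eq_self (fun x => ψ (x - s • e) * D x) (s • e)] at h1
        simp only [add_sub_cancel_right] at h1
        simp only [mul_comm _ (f _)]
        rw [h1, neg_neg]
    _ = ∫ x, ∫ s in Ioc 0 h, ψ x * D (x + s • e) := by
        rw [integral_integral_swap]
        refine hsh.bdd_mul (c := M) ?_ (Eventually.of_forall fun p => hM _)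
        exact Continuous.aestronglyMeasurable
          (hψ.continuous.comp (by fun_prop : Continuous fun p : ℝ × En n => p.2))
    _ = ∫ x, ψ x * ∫ s in Ioc 0 h, D (x + s • e) := by
        simp only [integral_const_mul]

/-- A consequence of the continuity of translations in `L¹`. -/
lemma continuous_setIntegral_translate {n : ℕ} (D : En n → ℝ) (hD : Integrable D) (e : En n)
    (K : Set (En n)) : Continuous fun s : ℝ => ∫ x in K, D (x + s • e) := by
  have hp : Fact ((1 : ℝ≥0∞) ≠ ⊤) := ⟨ENNReal.one_ne_top⟩
  have hm : MemLp D 1 volume := memLp_one_iff_integrable.mpr hD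
  have h1 : Continuous fun s : ℝ => (DomAddAct.mk (s • e) +ᵥ hm.toLp D : Lp ℝ 1 volume) := by
    have hc : Continuous fun s : ℝ => DomAddAct.mk (s • e) :=
      DomAddAct.continuous_mk.comp (by fun_prop : Continuous fun s : ℝ => s • e)
    exact hc.vadd continuous_const
  refine ((continuous_setIntegral K).comp h1).congr fun s => ?_
  refine integral_congr_ae (ae_restrict_of_ae ?_)
  show ∀ᵐ x, (DomAddAct.mk (s • e) +ᵥ hm.toLp D : Lp ℝ 1 volume) x = D (x + s • e)
  rw [DomAddAct.mk_vadd_toLp]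
  filter_upwards [MemLp.coeFn_toLp (hm.comp_measurePreserving
    (measurePreserving_vadd (s • e) (volume : Measure (En n))))] with x hx
  refine hx.trans ?_
  simp [add_comm]

/-- At a zero of a non-negative Sobolev function all directional derivatives are non-negative
(as difference quotients are). -/
lemma weakDeriv_nonneg_on_zeros {n : ℕ} (f D : En n → ℝ) (e : En n) (hf : Integrable f)
    (hf0 : ∀ x, 0 ≤ f x) (hD : Integrable D)
    (hw : ∀ ψ : En n → ℝ, ContDiff ℝ 1 ψ → HasCompactSupport ψ →
      ∫ x, f x * fderiv ℝ ψ x e = - ∫ x, ψ x * D x) :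
    ∀ᵐ x, f x = 0 → 0 ≤ D x := by
  set K : Set (En n) := {x | f x = 0 ∧ D x < 0} with hK
  have hKm : NullMeasurableSet K volume :=
    (nullMeasurableSet_eq_fun hf.aemeasurable aemeasurable_const).inter
      (nullMeasurableSet_lt hD.aemeasurable aemeasurable_const)
  have hcont := continuous_setIntegral_translate D hD e K
  have hpos : ∀ h : ℝ, 0 ≤ h → 0 ≤ ∫ s in Ioc 0 h, ∫ x in K, D (x + s • e) := by
    intro h hh
    have hsh := integrable_shear D hD e (volume.restrict (Ioc 0 h))
    have hsh' : Integrable (fun p : ℝ × En n => D (p.2 + p.1 • e))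
        ((volume.restrict (Ioc 0 h)).prod (volume.restrict K)) :=
      hsh.mono_measure (Measure.prod_mono le_rfl Measure.restrict_le_self)
    rw [integral_integral_swap hsh']
    refine integral_nonneg_of_ae ?_
    filter_upwards [ae_restrict_of_ae (ae_translate_sub f D e hf hD hw h hh),
      ae_restrict_mem₀ hKm] with x hx hxK
    rw [← hx, hxK.1, sub_zero]
    exact hf0 _
  have hle0 : ∀ᵐ x ∂(volume.restrict K), D x < 0 := by
    filter_upwards [ae_restrict_mem₀ hKm] with x hx using hx.2
  have hint0 : 0 ≤ ∫ x in K, D x := by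
    by_contra hneg
    push Not at hneg
    have h0 : (∫ x in K, D (x + (0 : ℝ) • e)) < (∫ x in K, D x) / 2 := by
      simp only [zero_smul, add_zero]; linarith
    have hev := (hcont.tendsto 0).eventually_lt_const h0
    obtain ⟨η, hη, hball⟩ := Metric.eventually_nhds_iff.mp hev
    have h1 := hpos (η / 2) (by positivity)
    have h2 : ∫ s in Ioc 0 (η / 2), (∫ x in K, D (x + s • e)) ≤
        ∫ s in Ioc 0 (η / 2), (∫ x in K, D x) / 2 := by
      refine setIntegral_mono_on (hcont.integrableOn_Ioc) (by simp) measurableSet_Ioc ?_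
      intro s hs
      refine (hball ?_).le
      rw [Real.dist_eq, sub_zero, abs_of_pos hs.1]
      linarith [hs.2]
    rw [setIntegral_const, smul_eq_mul, Measure.real, Real.volume_Ioc, sub_zero,
      ENNReal.toReal_ofReal (by positivity)] at h2
    nlinarith
  have hint1 : ∫ x in K, -D x = 0 := by
    rw [integral_neg]
    have : ∫ x in K, D x ≤ 0 := integral_nonpos_of_ae (hle0.mono fun x hx => hx.le)
    linarith
  have hz : (fun x => -D x) =ᵐ[volume.restrict K] 0 :=
    (integral_eq_zero_iff_of_nonneg_ae (hle0.mono fun x hx => by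
      show 0 ≤ -D x; linarith) hD.neg.integrableOn).mp hint1
  have hKnull : volume K = 0 := by
    have : ∀ᵐ x ∂(volume.restrict K), False := by
      filter_upwards [hz, hle0] with x h1 h2
      have : -D x = 0 := h1
      linarith
    rw [← Measure.restrict_eq_zero, ← ae_eq_bot]
    exact eventually_false_iff_eq_bot.mp this
  filter_upwards [measure_eq_zero_iff_ae_notMem.mp hKnull] with x hx hfx
  by_contra hc
  exact hx ⟨hfx, not_le.mp hc⟩

/-- The weak gradient of a non-negative `W^{1,1}_loc` function vanishes almost everywhere on its
zero set. -/
lemma weakGrad_zero {n : ℕ} (f : En n → ℝ) (f' : En n → En n) (hW : MemW f f') :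
    ∀ᵐ x, f x = 0 → f' x = 0 := by
  obtain ⟨hf0, hfi, hfl, hfl', hweak⟩ := hW
  -- testing with `ψ • e`
  have hdir : ∀ (e : En n) (ψ : En n → ℝ), ContDiff ℝ 1 ψ → HasCompactSupport ψ →
      ∫ x, f x * fderiv ℝ ψ x e = - ∫ x, ψ x * ⟪e, f' x⟫ := by
    intro e ψ hψ hψc
    have h1 := hweak (fun x => ψ x • e) (hψ.smul contDiff_const) hψc.smul_right
    have h2 : ∀ x, dvg (fun x => ψ x • e) x = fderiv ℝ ψ x e := by
      intro x
      have hd : DifferentiableAt ℝ ψ x := hψ.differentiable one_ne_zero x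
      have hfd : fderiv ℝ (fun x => ψ x • e) x = (fderiv ℝ ψ x).smulRight e :=
        (hd.hasFDerivAt.smul_const e).fderiv
      have he : e = ∑ i, e i • EuclideanSpace.single i (1 : ℝ) := by
        ext k; simp [Finset.sum_apply, Pi.single_apply]
      simp only [dvg, hfd]
      conv_rhs => rw [he, map_sum]
      refine Finset.sum_congr rfl fun i _ => ?_
      simp [mul_comm]
    simp only [h2, real_inner_smul_left] at h1
    exact h1
  have hloc : ∀ (e : En n) (N : ℕ), ∀ᵐ x, ‖x‖ < N + 1 → f x = 0 → 0 ≤ ⟪e, f' x⟫ := by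
    intro e N
    -- localise with a cutoff function equal to one on the ball of radius `N + 1`
    let χ : ContDiffBump (0 : En n) := ⟨N + 1, N + 2, by positivity, by linarith⟩
    have hχ : ContDiff ℝ 1 χ := χ.contDiff
    have hχc : HasCompactSupport (χ : En n → ℝ) := χ.hasCompactSupport
    have hdc : Continuous fun x => fderiv ℝ χ x e :=
      (hχ.continuous_fderiv one_ne_zero).clm_apply continuous_const
    have hdcs : HasCompactSupport fun x => fderiv ℝ χ x e := hχc.fderiv_apply ℝ e
    have hDl : LocallyIntegrable (fun x => ⟪e, f' x⟫) volume := by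
      intro x
      obtain ⟨s, hs, hi⟩ := hfl' x
      exact ⟨s, hs, hi.const_inner e⟩
    have hi1 : Integrable fun x => χ x * f x :=
      hfl.integrable_smul_left_of_hasCompactSupport hχ.continuous hχc
    have hi2 : Integrable fun x => χ x * ⟪e, f' x⟫ :=
      hDl.integrable_smul_left_of_hasCompactSupport hχ.continuous hχc
    have hi3 : Integrable fun x => fderiv ℝ χ x e * f x :=
      hfl.integrable_smul_left_of_hasCompactSupport hdc hdcs
    have key := weakDeriv_nonneg_on_zeros (fun x => χ x * f x)
      (fun x => χ x * ⟪e, f' x⟫ + fderiv ℝ χ x e * f x) e hi1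
      (fun x => mul_nonneg χ.nonneg (hf0 x)) (hi2.add hi3) (by
        intro ψ hψ hψc
        have h1 := hdir e (fun x => χ x * ψ x) (hχ.mul hψ) hψc.mul_left
        have h2 : ∀ x, fderiv ℝ (fun x => χ x * ψ x) x e
            = χ x * fderiv ℝ ψ x e + ψ x * fderiv ℝ χ x e := by
          intro x
          have := ((hχ.differentiable one_ne_zero x).hasFDerivAt.mul
            (hψ.differentiable one_ne_zero x).hasFDerivAt).fderiv
          have h3 : fderiv ℝ (fun x => χ x * ψ x) x = fderiv ℝ ((χ : En n → ℝ) * ψ) x := rfl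
          rw [h3, this]
          simp
        simp only [h2] at h1
        obtain ⟨M, hM⟩ := hψc.exists_bound_of_continuous hψ.continuous
        have hdψ : Continuous fun x => fderiv ℝ ψ x e :=
          (hψ.continuous_fderiv one_ne_zero).clm_apply continuous_const
        obtain ⟨M', hM'⟩ := (hψc.fderiv_apply ℝ e).exists_bound_of_continuous hdψ
        have j1 : Integrable fun x => χ x * f x * fderiv ℝ ψ x e :=
          hi1.mul_bdd hdψ.aestronglyMeasurable (Eventually.of_forall hM')
        have j2 : Integrable fun x => ψ x * (fderiv ℝ χ x e * f x) :=
          hi3.bdd_mul hψ.continuous.aestronglyMeasurable (Eventually.of_forall hM)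
        have j3 : Integrable fun x => ψ x * (χ x * ⟪e, f' x⟫) :=
          hi2.bdd_mul hψ.continuous.aestronglyMeasurable (Eventually.of_forall hM)
        have e1 : ∫ x, f x * (χ x * fderiv ℝ ψ x e + ψ x * fderiv ℝ χ x e)
            = (∫ x, χ x * f x * fderiv ℝ ψ x e) + ∫ x, ψ x * (fderiv ℝ χ x e * f x) := by
          rw [← integral_add j1 j2]
          refine integral_congr_ae (Eventually.of_forall fun x => ?_)
          ring
        have e2 : ∫ x, ψ x * (χ x * ⟪e, f' x⟫ + fderiv ℝ χ x e * f x)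
            = (∫ x, ψ x * (χ x * ⟪e, f' x⟫)) + ∫ x, ψ x * (fderiv ℝ χ x e * f x) := by
          rw [← integral_add j3 j2]
          simp only [mul_add]
        have e3 : ∫ x, χ x * ψ x * ⟪e, f' x⟫ = ∫ x, ψ x * (χ x * ⟪e, f' x⟫) := by
          refine integral_congr_ae (Eventually.of_forall fun x => ?_)
          ring
        rw [e1, e3] at h1
        rw [e2]
        linarith)
    filter_upwards [key] with x hx hxN hfx
    have h1 : χ x = 1 := χ.one_of_mem_closedBall (by
      rw [mem_closedBall_zero_iff]; exact hxN.le)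
    have := hx (by simp [hfx])
    simpa [h1, hfx] using this
  have hall : ∀ᵐ x, ∀ i : Fin n, ∀ N : ℕ, ‖x‖ < N + 1 → f x = 0 →
      0 ≤ ⟪EuclideanSpace.single i (1 : ℝ), f' x⟫ ∧
      0 ≤ ⟪-EuclideanSpace.single i (1 : ℝ), f' x⟫ := by
    rw [ae_all_iff]; intro i
    rw [ae_all_iff]; intro N
    filter_upwards [hloc (EuclideanSpace.single i 1) N, hloc (-EuclideanSpace.single i 1) N]
      with x h1 h2 h3 h4
    exact ⟨h1 h3 h4, h2 h3 h4⟩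
  filter_upwards [hall] with x hx hfx
  obtain ⟨N, hN⟩ := exists_nat_gt ‖x‖
  ext i
  obtain ⟨h1, h2⟩ := hx i N (by linarith) hfx
  rw [inner_neg_left] at h2
  have h3 : ⟪EuclideanSpace.single i (1 : ℝ), f' x⟫ = f' x i := by
    simp [EuclideanSpace.inner_single_left]
  rw [h3] at h1 h2
  simp only [PiLp.zero_apply]
  linarith

/-! ### Lower semicontinuity and the half-space -/

lemma perim_congr {n : ℕ} (f : En n → ℝ) (f' : En n → En n) {A B : Set (En n)}
    (h : A =ᵐ[volume] B) : perim f f' univ A = perim f f' univ B := by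
  have h1 : (A.indicator fun _ => (1 : ℝ)) =ᵐ[volume] (B.indicator fun _ => (1 : ℝ)) :=
    indicator_ae_eq_of_ae_eq_set h
  unfold perim bvVar
  refine iSup_congr fun φ => iSup_congr fun _ => ?_
  congr 1
  refine integral_congr_ae (ae_restrict_of_ae ?_)
  filter_upwards [h1] with x hx
  rw [hx]

/-- If `σ` vanishes where the density `g` does, then convergence of sets in `g dx`-measure implies
convergence of their `σ`-integrals. -/
lemma tendsto_integral_indicator {n : ℕ} (g : En n → ℝ≥0∞) (hg : Measurable g)
    (hgf : ∫⁻ x, g x ≠ ⊤) (σ : En n → ℝ) (hσ : Integrable σ)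
    (h0 : ∀ᵐ x, g x = 0 → σ x = 0) (F : ℕ → Set (En n)) (H : Set (En n))
    (hF : ∀ k, MeasurableSet (F k)) (hH : MeasurableSet H)
    (h1 : Tendsto (fun k => (volume.withDensity g) (F k \ H)) atTop (𝓝 0))
    (h2 : Tendsto (fun k => (volume.withDensity g) (H \ F k)) atTop (𝓝 0)) :
    Tendsto (fun k => ∫ x, (F k).indicator (fun _ => (1 : ℝ)) x * σ x) atTop
      (𝓝 (∫ x, H.indicator (fun _ => (1 : ℝ)) x * σ x)) := by
  have hmul : ∀ (A : Set (En n)) x, A.indicator (fun _ => (1 : ℝ)) x * σ x = A.indicator σ x := by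
    intro A x
    by_cases hx : x ∈ A <;> simp [hx]
  simp only [hmul]
  have : IsFiniteMeasure (volume.withDensity g) := isFiniteMeasure_withDensity hgf
  have hσf : ∫⁻ x, ‖σ x‖ₑ ≠ ⊤ := hσ.2.ne
  have : IsFiniteMeasure (volume.withDensity fun x => ‖σ x‖ₑ) := isFiniteMeasure_withDensity hσf
  have hac : (volume.withDensity fun x => ‖σ x‖ₑ) ≪ volume.withDensity g := by
    refine Measure.AbsolutelyContinuous.mk fun s hs hs0 => ?_
    rw [withDensity_apply _ hs] at hs0 ⊢
    rw [lintegral_eq_zero_iff hg] at hs0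
    rw [← lintegral_zero (μ := volume.restrict s)]
    refine lintegral_congr_ae ?_
    filter_upwards [hs0, ae_restrict_of_ae h0] with x hx hx0
    simp [hx0 hx]
  have hrn := Measure.withDensity_rnDeriv_eq _ _ hac
  refine tendsto_integral_of_L1 _ (hσ.indicator hH).1
    (Eventually.of_forall fun k => hσ.indicator (hF k)) ?_
  have hs : ∀ k, MeasurableSet ((F k \ H) ∪ (H \ F k)) := fun k =>
    ((hF k).diff hH).union (hH.diff (hF k))
  have heq : ∀ k, ∫⁻ x, ‖(F k).indicator σ x - H.indicator σ x‖ₑ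
      = ∫⁻ x in (F k \ H) ∪ (H \ F k),
        ((volume.withDensity fun x => ‖σ x‖ₑ).rnDeriv (volume.withDensity g)) x
          ∂(volume.withDensity g) := by
    intro k
    rw [← withDensity_apply _ (hs k), hrn, withDensity_apply _ (hs k), ← lintegral_indicator (hs k)]
    refine lintegral_congr fun x => ?_
    by_cases ha : x ∈ F k <;> by_cases hb : x ∈ H <;> simp [ha, hb]
  simp only [heq]
  refine tendsto_setLIntegral_zero ?_ ?_
  · rw [← setLIntegral_univ, ← withDensity_apply _ MeasurableSet.univ, hrn]
    exact measure_ne_top _ _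
  · refine tendsto_of_tendsto_of_tendsto_of_le_of_le tendsto_const_nhds
      (by simpa using h1.add h2) (fun _ => zero_le) fun k => measure_union_le _ _

lemma integrable_testField {n : ℕ} (f : En n → ℝ) (f' : En n → En n) (hW : MemW f f')
    (φ : En n → En n) (hφ : IsTestField univ φ) :
    Integrable fun x => f x * dvg φ x + ⟪φ x, f' x⟫ := by
  obtain ⟨hf0, hfi, hfl, hfl', -⟩ := hW
  obtain ⟨hφ1, hφc, -, hφb⟩ := hφ
  refine Integrable.add ?_ ?_
  · have hdc : Continuous (dvg φ) := by
      unfold dvg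
      refine continuous_finsetSum _ fun i _ => ?_
      have := (hφ1.continuous_fderiv one_ne_zero).clm_apply
        (continuous_const (y := (EuclideanSpace.single i (1 : ℝ) : En n)))
      fun_prop
    have hdcs : HasCompactSupport (dvg φ) := by
      refine (hφc.fderiv ℝ).mono' ?_
      refine fun x hx => subset_tsupport _ ?_
      intro h
      apply hx
      simp [dvg, h]
    obtain ⟨M, hM⟩ := hdcs.exists_bound_of_continuous hdc
    exact hfi.mul_bdd hdc.aestronglyMeasurable (Eventually.of_forall hM)
  · have hK : IsCompact (tsupport φ) := hφc
    have h1 : IntegrableOn f' (tsupport φ) := hfl'.integrableOn_isCompact hK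
    have h2 : IntegrableOn (fun x => ⟪φ x, f' x⟫) (tsupport φ) := by
      refine Integrable.mono h1
        (hφ1.continuous.aestronglyMeasurable.inner h1.1) (Eventually.of_forall fun x => ?_)
      refine (norm_inner_le_norm _ _).trans ?_
      nlinarith [hφb x, norm_nonneg (f' x)]
    refine (integrableOn_iff_integrable_of_support_subset ?_).mp h2
    intro x hx
    refine subset_tsupport _ fun h => hx ?_
    simp [h]

lemma halfSpaceOf_spec {n : ℕ} (f : En n → ℝ) (hfi : Integrable f) (v : En n) (hv : ‖v‖ = 1)
    (E : Set (En n)) :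
    MeasurableSet (halfSpaceOf f E v) ∧ muM f (halfSpaceOf f E v) = muM f E := by
  have hfin : ∫⁻ x, ENNReal.ofReal (f x) ≠ ⊤ := hfi.lintegral_lt_top.ne
  have : IsFiniteMeasure (muM f) := isFiniteMeasure_withDensity hfin
  refine upset_measure (muM f) (fun x => ⟪x, v⟫) (by fun_prop) (fun c => ?_) (muM f E)
    (measure_mono (subset_univ _))
  refine withDensity_absolutelyContinuous _ _ ?_
  have hm : MeasurableSet ((fun x : En n => ⟪x, v⟫) ⁻¹' {c}) :=
    (by fun_prop : Measurable fun x : En n => ⟪x, v⟫) (measurableSet_singleton c)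
  have hvv : ⟪v, v⟫ = (1 : ℝ) := by rw [real_inner_self_eq_norm_sq, hv]; norm_num
  -- every line in direction `v` meets the hyperplane in a single point
  rw [← lintegral_indicator_one hm, ← lintegral_lines v hv _ (measurable_one.indicator hm)]
  refine (lintegral_congr fun x => ?_).trans lintegral_zero
  have h0 : ∫⁻ t : ℝ, ((fun x : En n => ⟪x, v⟫) ⁻¹' {c}).indicator (1 : En n → ℝ≥0∞) (x + t • v)
      = 0 := by
    rw [← lintegral_zero (μ := (volume : Measure ℝ))]
    refine lintegral_congr_ae ?_
    filter_upwards [compl_mem_ae_iff.mpr (measure_singleton (c - ⟪x, v⟫))] with t ht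
    refine indicator_of_notMem (fun hmem => ht ?_) _
    have : ⟪x + t • v, v⟫ = c := hmem
    rw [inner_add_left, real_inner_smul_left, hvv] at this
    show t = c - ⟪x, v⟫
    linarith
  rw [h0, mul_zero]

/-- **Half-spaces are isoperimetric sets.** If `n ≥ 2` and `μ = f·Lⁿ ∈ 𝒲(ℝⁿ)` is a
PS measure, then for every direction `v` and measurable set `E`,
`Per_μ(H_μ(E, v)) ≤ Per_μ(E)`. -/
theorem halfspaces_minimal {n : ℕ} (hn : 2 ≤ n) (f : En n → ℝ) (f' : En n → En n)
    (hW : MemW f f') (hPS : IsPSMeasure f f')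
    (v : En n) (hv : ‖v‖ = 1) (E : Set (En n)) (hE : NullMeasurableSet E volume) :
    perim f f' univ (halfSpaceOf f E v) ≤ perim f f' univ E := by
  have hW0 := hW
  obtain ⟨hf0, hfi, -⟩ := hW0
  by_cases hEtop : perim f f' univ E = ⊤
  · rw [hEtop]; exact le_top
  -- a Borel version of the density
  have haem : AEMeasurable (fun x => ENNReal.ofReal (f x)) volume :=
    hfi.1.aemeasurable.ennreal_ofReal
  obtain ⟨g, hg, hfg'⟩ := haem
  have hfg : g =ᵐ[volume] fun x => ENNReal.ofReal (f x) := hfg'.symm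
  have hgf : ∫⁻ x, g x ≠ ⊤ := by
    rw [lintegral_congr_ae hfg]; exact hfi.lintegral_lt_top.ne
  have hmu : muM f = volume.withDensity g := withDensity_congr_ae hfg'
  have hfin : IsFiniteMeasure (volume.withDensity g) := isFiniteMeasure_withDensity hgf
  obtain ⟨hHm, hHμ⟩ := halfSpaceOf_spec f hfi v hv E
  rw [hmu] at hHμ
  have hHup : ∀ x y, ⟪x, v⟫ ≤ ⟪y, v⟫ → x ∈ halfSpaceOf f E v → y ∈ halfSpaceOf f E v :=
    fun x y hxy hx b hb => (hx b hb).trans hxy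
  set H := halfSpaceOf f E v with hHdef
  -- the competitors: sets with the mass of `E` and no more perimeter than `E`
  set C : Set (Set (En n)) := {F | MeasurableSet F ∧
    (volume.withDensity g) F = (volume.withDensity g) H ∧
    perim f f' univ F ≤ perim f f' univ E} with hCdef
  have hne : C.Nonempty := by
    obtain ⟨E₀, hE₀, hEE₀⟩ := hE
    refine ⟨E₀, hE₀, ?_, (perim_congr f f' hEE₀).ge⟩
    rw [hHμ]
    exact measure_congr ((withDensity_absolutelyContinuous volume g).ae_eq hEE₀.symm)
  have hCsymm : ∀ F ∈ C, ∀ w : En n, ‖w‖ = 1 → 0 ≤ ⟪w, v⟫ → ∃ S ∈ C,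
      (volume.withDensity g) (S \ H) + ∫⁻ x, wt ⟪x, w⟫ *
        min (∫⁻ t : ℝ, (F \ H).indicator g (x + t • w))
          (∫⁻ t : ℝ, (H \ F).indicator g (x + t • w)) ≤ (volume.withDensity g) (F \ H) := by
    rintro F ⟨hFm, hFμ, hFp⟩ w hw hwv
    obtain ⟨S, hSm, hSe, hSμ, hS⟩ := symm_gain f g hg hgf hfg v w hw hwv F H hFm hHm hHup
    refine ⟨S, ⟨hSm, hSμ.trans hFμ, ?_⟩, hS⟩
    rw [perim_congr f f' hSe]
    exact (hPS w hw F hFm.nullMeasurableSet (hFp.trans_lt (Ne.lt_top hEtop))).trans hFp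
  have hclose : ∀ k : ℕ, ∃ F ∈ C, (volume.withDensity g) (F \ H) < ((k : ℝ≥0∞) + 1)⁻¹ :=
    fun k => exists_close (by omega) g hg hgf v H hHm hHup C hne
      (fun F hF => ⟨hF.1, hF.2.1⟩) hCsymm _ (ENNReal.inv_pos.mpr (by finiteness))
  choose F hFC hFlt using hclose
  have hlim : Tendsto (fun k : ℕ => ((k : ℝ≥0∞) + 1)⁻¹) atTop (𝓝 0) := by
    have := (tendsto_add_atTop_iff_nat 1).mpr ENNReal.tendsto_inv_nat_nhds_zero
    simpa using this
  have hFH : Tendsto (fun k => (volume.withDensity g) (F k \ H)) atTop (𝓝 0) :=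
    tendsto_of_tendsto_of_tendsto_of_le_of_le tendsto_const_nhds hlim (fun _ => zero_le)
      fun k => (hFlt k).le
  have hHF : Tendsto (fun k => (volume.withDensity g) (H \ F k)) atTop (𝓝 0) := by
    refine hFH.congr fun k => ?_
    have h1 := measure_sdiff_add_inter (μ := volume.withDensity g) (F k) hHm
    have h2 := measure_sdiff_add_inter (μ := volume.withDensity g) H (hFC k).1
    rw [inter_comm, (hFC k).2.1, ← h2] at h1
    exact (ENNReal.add_left_inj (measure_ne_top _ _)).mp h1
  -- lower semicontinuity of the perimeter
  refine iSup₂_le fun φ hφ => ?_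
  have h0 : ∀ᵐ x, g x = 0 → f x * dvg φ x + ⟪φ x, f' x⟫ = 0 := by
    filter_upwards [weakGrad_zero f f' hW, hfg] with x hx hgx hgx0
    have hfx : f x = 0 := by
      have : ENNReal.ofReal (f x) = 0 := hgx ▸ hgx0
      exact le_antisymm (ENNReal.ofReal_eq_zero.mp this) (hf0 x)
    simp [hfx, hx hfx]
  have hT := tendsto_integral_indicator g hg hgf _ (integrable_testField f f' hW φ hφ) h0 F H
    (fun k => (hFC k).1) hHm hFH hHF
  rw [setIntegral_univ]
  refine le_of_tendsto (ENNReal.tendsto_ofReal hT) (Eventually.of_forall fun k => ?_)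
  refine le_trans ?_ (hFC k).2.2
  refine le_trans ?_ (le_iSup₂ (f := fun φ (_ : IsTestField univ φ) => ENNReal.ofReal
    (∫ x in univ, (F k).indicator (fun _ => (1 : ℝ)) x * (f x * dvg φ x + ⟪φ x, f' x⟫))) φ hφ)
  rw [setIntegral_univ]

end
end

section
/- Let μ = f·L¹ with f ∈ L¹(ℝ) and f ≥ 0. Let E ⊆ ℝ be Lebesgue-measurable and suppose the interval (a, b) satisfies μ(Eᶜ ∩ (a, b)) = α and μ(E ∩ [b, ∞)) = β. Then μ(S_{−1}(E) ∩ [b, ∞)) ≤ max{β − α, 0}; equivalently, μ(S_{−1}(E) ∖ (−∞, b]) ≤ μ(E ∖ (−∞, b]) − min{α, β}. In particular: (1) μ(S_{−1}(E) ∖ (−∞, b]) ≤ μ(E ∖ (−∞, b]); and (2) if there exist x > y and r > 0 with (x − r, x + r) ∩ (y − r, y + r) = ∅, μ(E ∩ (x − r, x + r)) > 0, and μ(Eᶜ ∩ (y − r, y + r)) > 0, then μ(S_{−1}(E) ∖ (−∞, b]) < μ(E ∖ (−∞, b]) for every b with y + r < b < x − r. -/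
/-!
The proof uses two facts about `S = ehrhard1D μ (-1) E`: it is a down-set, and `μ S ≤ μ E`
(`ehrhard1D_neg_one_measure_le`, by continuity from below and the absence of atoms). If `S` misses
`[b, ∞)` there is nothing to prove. Otherwise `S ⊇ (-∞, b)`, and so
`μ (S ∩ [b, ∞)) = μ S - μ (-∞, b) ≤ μ E - μ (-∞, b) = μ (E ∩ [b, ∞)) - μ (Eᶜ ∩ (-∞, b))`,
which is at most `β - α`. The other claims follow because points are null; the strict inequality
is the case `a = y - r` with `α` and `β` both positive and finite.
-/

open MeasureTheory Set Filter
open scoped ENNReal Topology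

noncomputable section

/-- The weighted variation `‖g‖_{BV_ν(ℝ)}` for `ν = f·L¹` with weak derivative `f'`. -/
noncomputable def bvVar1 (f f' : ℝ → ℝ) (g : ℝ → ℝ) : ℝ≥0∞ :=
  ⨆ (φ : ℝ → ℝ) (_ : ContDiff ℝ 1 φ ∧ HasCompactSupport φ ∧ ∀ x, |φ x| ≤ 1),
    ENNReal.ofReal (∫ x, g x * (f x * deriv φ x + φ x * f' x))

/-- The weighted perimeter `Per_ν(E)`. -/
noncomputable def perim1 (f f' : ℝ → ℝ) (E : Set ℝ) : ℝ≥0∞ :=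
  bvVar1 f f' (E.indicator fun _ => (1 : ℝ))

/-- The measure `ν = f·L¹`. -/
noncomputable def mu1 (f : ℝ → ℝ) : Measure ℝ :=
  volume.withDensity fun x => ENNReal.ofReal (f x)

/-- `ν = f·L¹` is a perimeter symmetrization (PS) measure on `ℝ`. -/
def IsPS1 (f f' : ℝ → ℝ) : Prop :=
  ∀ v : ℝ, (v = 1 ∨ v = -1) → ∀ E : Set ℝ, NullMeasurableSet E volume →
    perim1 f f' E < ⊤ →
      perim1 f f' (ehrhard1D (mu1 f) v E) ≤ perim1 f f' E

theorem ehrhard1D_neg_one_isLowerSet (ν : Measure ℝ) (A : Set ℝ) :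
    IsLowerSet (ehrhard1D ν (-1) A) := by
  intro s t hts hs b hb
  have := hs b hb
  linarith

theorem measure_Iic_le_of_lt_mem_ehrhard1D {ν : Measure ℝ} {A : Set ℝ} {s t : ℝ}
    (ht : t ∈ ehrhard1D ν (-1) A) (hst : s < t) : ν (Iic s) ≤ ν A := by
  by_contra hlt
  have h := ht (-s) fun c hc => by
    by_contra hcs
    refine hlt (le_trans (measure_mono fun y hy => ?_) hc)
    have hy' : y ≤ s := hy
    simp only [mem_ofPred_eq]
    linarith
  linarith

/-- Symmetrization does not increase mass. Up to its at most one maximal point, the symmetrized set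
is a directed countable union of half-lines `Iic q`, `q` rational, of mass at most `ν A`. -/
theorem ehrhard1D_neg_one_measure_le (ν : Measure ℝ) [NullSingletonClass ν] (A : Set ℝ) :
    ν (ehrhard1D ν (-1) A) ≤ ν A := by
  set S := ehrhard1D ν (-1) A with hS
  let Q : Set ℚ := {q | ∃ t ∈ S, (q : ℝ) < t}
  let U : Set ℝ := ⋃ q ∈ Q, Iic (q : ℝ)
  have hU : ν U ≤ ν A := by
    have hdir : DirectedOn (Function.onFun (· ⊆ ·) fun q : ℚ => Iic (q : ℝ)) Q := by
      intro p hp q hq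
      rcases le_total p q with h | h
      · exact ⟨q, hq, Iic_subset_Iic.2 (by exact_mod_cast h), Subset.rfl⟩
      · exact ⟨p, hp, Subset.rfl, Iic_subset_Iic.2 (by exact_mod_cast h)⟩
    rw [measure_biUnion_eq_iSup Q.to_countable hdir]
    refine iSup₂_le fun q hq => ?_
    obtain ⟨t, ht, hqt⟩ := hq
    exact measure_Iic_le_of_lt_mem_ehrhard1D ht hqt
  have hsub : (S \ U).Subsingleton := by
    have key : ∀ x ∈ S \ U, ∀ y ∈ S, y ≤ x := by
      intro x hx y hy
      by_contra hxy
      obtain ⟨q, hxq, hqy⟩ := exists_rat_btwn (not_le.1 hxy)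
      exact hx.2 (mem_biUnion (show q ∈ Q from ⟨y, hy, hqy⟩) hxq.le)
    exact fun x hx y hy => le_antisymm (key y hy x hx.1) (key x hx y hy.1)
  calc ν S ≤ ν (U ∪ S \ U) := measure_mono fun x hx => by
        by_cases h : x ∈ U
        · exact Or.inl h
        · exact Or.inr ⟨hx, h⟩
    _ ≤ ν U + ν (S \ U) := measure_union_le _ _
    _ = ν U := by rw [hsub.measure_zero ν, add_zero]
    _ ≤ ν A := hU

/-- The mass comparison beyond `b`, for an arbitrary finite atomless measure. -/
theorem ehrhard1D_neg_one_inter_Ici_le (ν : Measure ℝ) [NullSingletonClass ν] [IsFiniteMeasure ν]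
    {E : Set ℝ} (hE : NullMeasurableSet E ν) (a b : ℝ) :
    ν (ehrhard1D ν (-1) E ∩ Ici b) ≤ ν (E ∩ Ici b) - ν (Eᶜ ∩ Ioo a b) := by
  set S := ehrhard1D ν (-1) E with hS
  rcases (S ∩ Ici b).eq_empty_or_nonempty with h0 | ⟨t, htS, htb⟩
  · simp [h0]
  have hsub : Iio b ⊆ S := fun x hx =>
    ehrhard1D_neg_one_isLowerSet ν E (le_trans (le_of_lt hx) htb) htS
  refine ENNReal.le_sub_of_add_le_right (measure_ne_top _ _) ?_
  have hmono : ν (Eᶜ ∩ Ioo a b) ≤ ν (Iio b \ E) :=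
    measure_mono fun x hx => ⟨hx.2.2, hx.1⟩
  have h1 : ν (S ∩ Ici b) + ν (Iio b) = ν S := by
    have h := measure_inter_add_sdiff (μ := ν) S (measurableSet_Ici (a := b))
    rwa [sdiff_eq, compl_Ici, inter_eq_right.2 hsub] at h
  have h2 : ν (E ∩ Ici b) + ν (E ∩ Iio b) = ν E := by
    have h := measure_inter_add_sdiff (μ := ν) E (measurableSet_Ici (a := b))
    rwa [sdiff_eq, compl_Ici] at h
  have h3 : ν (E ∩ Iio b) + ν (Iio b \ E) = ν (Iio b) := by
    rw [inter_comm]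
    exact measure_inter_add_sdiff₀ _ hE
  have h4 : ν S ≤ ν E := ehrhard1D_neg_one_measure_le ν E
  -- The finite quantity `ν (E ∩ Iio b)` is cancelled from both sides.
  refine (ENNReal.add_le_add_iff_right (measure_ne_top ν (E ∩ Iio b))).1 ?_
  calc ν (S ∩ Ici b) + ν (Eᶜ ∩ Ioo a b) + ν (E ∩ Iio b)
      ≤ ν (S ∩ Ici b) + ν (Iio b \ E) + ν (E ∩ Iio b) := by gcongr
    _ = ν (S ∩ Ici b) + ν (Iio b) := by rw [add_assoc, add_comm (ν (Iio b \ E)), h3]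
    _ ≤ ν (E ∩ Ici b) + ν (E ∩ Iio b) := by rw [h1, h2]; exact h4

theorem measure_sdiff_Iic_eq_inter_Ici (ν : Measure ℝ) [NullSingletonClass ν] (A : Set ℝ) (b : ℝ) :
    ν (A \ Iic b) = ν (A ∩ Ici b) := by
  rw [sdiff_eq, compl_Iic]
  exact measure_congr (Filter.EventuallyEq.rfl.inter Ioi_ae_eq_Ici)

theorem mu1_absolutelyContinuous (f : ℝ → ℝ) : mu1 f ≪ volume :=
  withDensity_absolutelyContinuous _ _

/-- **One-dimensional behavior** of Ehrhard symmetrization in direction `−1`: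
mass control on `[b, ∞)` together with the strict version. -/
theorem one_dimensional_behavior (f : ℝ → ℝ) (hnonneg : ∀ x, 0 ≤ f x)
    (hint : Integrable f volume)
    (E : Set ℝ) (hE : NullMeasurableSet E volume)
    (a b : ℝ) (hab : a < b) (α β : ℝ≥0∞)
    (hα : mu1 f (Eᶜ ∩ Ioo a b) = α) (hβ : mu1 f (E ∩ Ici b) = β) :
    mu1 f (ehrhard1D (mu1 f) (-1) E ∩ Ici b) ≤ β - α ∧
    mu1 f (ehrhard1D (mu1 f) (-1) E \ Iic b) ≤ mu1 f (E \ Iic b) - min α β ∧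
    mu1 f (ehrhard1D (mu1 f) (-1) E \ Iic b) ≤ mu1 f (E \ Iic b) ∧
    (∀ x y r : ℝ, y < x → 0 < r →
      Disjoint (Ioo (x - r) (x + r)) (Ioo (y - r) (y + r)) →
      0 < mu1 f (E ∩ Ioo (x - r) (x + r)) →
      0 < mu1 f (Eᶜ ∩ Ioo (y - r) (y + r)) →
      ∀ b' : ℝ, y + r < b' → b' < x - r →
        mu1 f (ehrhard1D (mu1 f) (-1) E \ Iic b') < mu1 f (E \ Iic b')) := by
  have hac := mu1_absolutelyContinuous f
  have : NullSingletonClass (mu1 f) := ⟨fun x => hac (measure_singleton x)⟩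
  have : IsFiniteMeasure (mu1 f) := isFiniteMeasure_withDensity_ofReal hint.2
  have hE' : NullMeasurableSet E (mu1 f) := hE.mono_ac hac
  have main := ehrhard1D_neg_one_inter_Ici_le (mu1 f) hE'
  have h1 : mu1 f (ehrhard1D (mu1 f) (-1) E ∩ Ici b) ≤ β - α := hα ▸ hβ ▸ main a b
  have h2 : mu1 f (ehrhard1D (mu1 f) (-1) E \ Iic b) ≤ mu1 f (E \ Iic b) - min α β := by
    rw [measure_sdiff_Iic_eq_inter_Ici, measure_sdiff_Iic_eq_inter_Ici, hβ]
    exact h1.trans (tsub_le_tsub_left (min_le_left _ _) _)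
  refine ⟨h1, h2, h2.trans tsub_le_self, ?_⟩
  intro x y r _ _ _ hx hy b' hyb hbx
  rw [measure_sdiff_Iic_eq_inter_Ici, measure_sdiff_Iic_eq_inter_Ici]
  refine (main (y - r) b').trans_lt (ENNReal.sub_lt_self (measure_ne_top _ _) ?_ ?_)
  · have hsub : E ∩ Ioo (x - r) (x + r) ⊆ E ∩ Ici b' :=
      fun z hz => ⟨hz.1, (hbx.trans hz.2.1).le⟩
    exact (hx.trans_le (measure_mono hsub)).ne'
  · have hsub : Eᶜ ∩ Ioo (y - r) (y + r) ⊆ Eᶜ ∩ Ioo (y - r) b' :=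
      fun z hz => ⟨hz.1, hz.2.1, hz.2.2.trans hyb⟩
    exact hy.trans_le (measure_mono hsub) |>.ne'

end
end

section
/- Let n ≥ 2, let μ = f·Lⁿ ∈ 𝒲(ℝⁿ) be a PS measure, let E ⊆ ℝⁿ be a Lebesgue-measurable set, and let v ∈ S^{n−1}. Then for every η ∈ S^{n−1} with v·η > 0, μ(S_η(E) ∖ H_μ(E, v)) ≤ μ(E ∖ H_μ(E, v)). -/
/-!
The inequality holds line by line. Since `v·η > 0`, the
half-space `H = H_μ(E, v)` meets every line parallel to `η` in an upper set, and so does `S_η(E)`;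
hence on each line one of them contains the other. If `S_η(E)` is the smaller one, the left-hand
side vanishes on that line. If it is the larger one, then, `ν` being the fibre measure,
`ν(S ∖ H) = ν(S) - ν(H) ≤ ν(E) - ν(H) ≤ ν(E ∖ H)` (`ehrhard1D_diff_le`). Tonelli's theorem then
gives the claim.

Tonelli is used in the form `lintegral_eq_slab`: the integral over `ℝⁿ` equals the integral, over
base points in the slab `0 ≤ z·η < 1`, of the line integrals in direction `η`. This follows
from translation invariance alone, without splitting `ℝⁿ` as a product. To have measurable
integrands, `f` and `E` are replaced by a.e. equal measurable versions, which changes `S_η(E)` only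
by a null set (`ehrhardSymm_ae_eq`).
-/

open MeasureTheory Set Filter
open scoped ENNReal RealInnerProductSpace Topology

noncomputable section

/-! ### The one-dimensional inequality -/

lemma mem_ehrhard1D_iff (ν : Measure ℝ) (A : Set ℝ) (t : ℝ) :
    t ∈ ehrhard1D ν 1 A ↔ ∀ q : ℚ, t < q → ν (Ici (q : ℝ)) ≤ ν A := by
  simp only [ehrhard1D, mem_ofPred_eq, one_mul]
  change (∀ b : ℝ, (∀ c : ℝ, ν (Ici c) ≤ ν A → b ≤ c) → b ≤ t) ↔ _
  constructor
  · intro h q hq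
    by_contra hlt
    refine absurd (h q fun c hc => ?_) (not_le.2 hq)
    by_contra hcq
    exact hlt ((measure_mono (Ici_subset_Ici.2 (not_le.1 hcq).le)).trans hc)
  · intro h b hb
    by_contra hlt
    obtain ⟨q, hq1, hq2⟩ := exists_rat_btwn (not_le.1 hlt)
    exact absurd (hb q (h q hq1)) (not_le.2 hq2)

lemma isUpperSet_ehrhard1D (ν : Measure ℝ) (A : Set ℝ) : IsUpperSet (ehrhard1D ν 1 A) := by
  intro s t hst hs
  rw [mem_ehrhard1D_iff] at hs ⊢
  exact fun q hq => hs q (hst.trans_lt hq)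

/-- Up to its possible left endpoint, which is not an atom, `ehrhard1D ν 1 A` is an increasing
union of half-lines of measure at most `ν A`. -/
lemma measure_ehrhard1D_le (ν : Measure ℝ) [NullSingletonClass ν] (A : Set ℝ) :
    ν (ehrhard1D ν 1 A) ≤ ν A := by
  set S := ehrhard1D ν 1 A with hS
  let Q : Set ℚ := {q | ∃ s ∈ S, s < q}
  have hsub : S ⊆ (⋃ q : Q, Ici ((q : ℚ) : ℝ)) ∪ {sInf S} := by
    intro t ht
    by_cases h : ∃ s ∈ S, s < t
    · obtain ⟨s, hs, hst⟩ := h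
      obtain ⟨q, hq1, hq2⟩ := exists_rat_btwn hst
      exact Or.inl (mem_iUnion.2 ⟨⟨q, s, hs, hq1⟩, hq2.le⟩)
    · push Not at h
      exact Or.inr (IsLeast.csInf_eq ⟨ht, h⟩).symm
  calc ν S ≤ ν ((⋃ q : Q, Ici ((q : ℚ) : ℝ)) ∪ {sInf S}) := measure_mono hsub
    _ ≤ ν (⋃ q : Q, Ici ((q : ℚ) : ℝ)) + ν {sInf S} := measure_union_le _ _
    _ = ⨆ q : Q, ν (Ici ((q : ℚ) : ℝ)) := by
        rw [measure_singleton, add_zero]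
        refine Directed.measure_iUnion ?_
        intro a b
        rcases le_total (a : ℚ) b with hab | hab
        · exact ⟨a, Subset.rfl, Ici_subset_Ici.2 (by exact_mod_cast hab)⟩
        · exact ⟨b, Ici_subset_Ici.2 (by exact_mod_cast hab), Subset.rfl⟩
    _ ≤ ν A := by
        refine iSup_le fun ⟨q, s, hs, hsq⟩ => ?_
        exact (mem_ehrhard1D_iff ν A s).1 hs q hsq

lemma ehrhard1D_diff_le (ν : Measure ℝ) [NullSingletonClass ν] (A U : Set ℝ) (hU : IsUpperSet U)
    (hfin : ν U ≠ ⊤) : ν (ehrhard1D ν 1 A \ U) ≤ ν (A \ U) := by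
  have hUm : MeasurableSet U := hU.ordConnected.measurableSet
  rcases (isUpperSet_ehrhard1D ν A).total hU with h | h
  · simp [sdiff_eq_empty.2 h]
  · refine (ENNReal.add_le_add_iff_right hfin).1 ?_
    calc ν (ehrhard1D ν 1 A \ U) + ν U = ν (ehrhard1D ν 1 A) := by
          rw [← measure_sdiff_add_inter (ehrhard1D ν 1 A) hUm, inter_eq_right.2 h]
      _ ≤ ν A := measure_ehrhard1D_le ν A
      _ = ν (A \ U) + ν (A ∩ U) := (measure_sdiff_add_inter _ hUm).symm
      _ ≤ ν (A \ U) + ν U := by gcongr; exact inter_subset_right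

/-! ### Integration along parallel lines -/

section lines
variable {n : ℕ}

/-- The point of the line `z + ℝ η` lying in `η^⊥`, for a unit vector `η`. -/
def base (η z : En n) : En n := z - ⟪z, η⟫ • η

lemma measurable_base (η : En n) : Measurable (base η) := by
  have : Continuous (base η) := by unfold base; fun_prop
  exact this.measurable

lemma inner_base_add {η : En n} (hη : ‖η‖ = 1) (z : En n) (t : ℝ) :
    ⟪base η z + t • η, η⟫ = t := by
  simp [base, inner_add_left, inner_sub_left, real_inner_smul_left, hη]

lemma base_base_add {η : En n} (hη : ‖η‖ = 1) (z : En n) (t : ℝ) :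
    base η (base η z + t • η) = base η z := by
  rw [base, inner_base_add hη]; simp

lemma base_add (η z : En n) (t : ℝ) : base η z + t • η = z + (t - ⟪z, η⟫) • η := by
  rw [base, sub_smul]; abel

lemma lintegral_eq_slab {η : En n} (hη : ‖η‖ = 1) {G : En n → ℝ≥0∞} (hG : Measurable G) :
    ∫⁻ z, G z = ∫⁻ z in {z : En n | ⟪z, η⟫ ∈ Ico (0 : ℝ) 1}, ∫⁻ t : ℝ, G (base η z + t • η) := by
  have hslab : MeasurableSet {z : En n | ⟪z, η⟫ ∈ Ico (0 : ℝ) 1} := by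
    have : Measurable fun z : En n => ⟪z, η⟫ := by fun_prop
    exact this measurableSet_Ico
  let w : En n → ℝ≥0∞ := {z : En n | ⟪z, η⟫ ∈ Ico (0 : ℝ) 1}.indicator 1
  have hw : Measurable w := measurable_one.indicator hslab
  -- every line parallel to `η` meets the slab in a segment of length one
  have hw1 : ∀ z, ∫⁻ t : ℝ, w (z - t • η) = 1 := by
    intro z
    have : (fun t : ℝ => w (z - t • η)) = (Ioc (⟪z, η⟫ - 1) ⟪z, η⟫).indicator 1 := by
      ext t
      simp only [w, indicator, mem_ofPred_eq, inner_sub_left, real_inner_smul_left,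
        real_inner_self_eq_norm_sq, hη, mem_Ico, mem_Ioc, Pi.one_apply]
      congr 1
      apply propext
      constructor <;> rintro ⟨h1, h2⟩ <;> constructor <;> linarith
    rw [this, lintegral_indicator_one measurableSet_Ioc, Real.volume_Ioc]
    simp
  have hm : Measurable fun p : En n × ℝ => p.1 - p.2 • η := by fun_prop
  have hp : Measurable fun p : En n × ℝ => p.1 + p.2 • η := by fun_prop
  calc ∫⁻ z, G z = ∫⁻ z, ∫⁻ t : ℝ, G z * w (z - t • η) := by
        refine lintegral_congr fun z => ?_
        rw [lintegral_const_mul, hw1, mul_one]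
        exact hw.comp (by fun_prop)
    _ = ∫⁻ t : ℝ, ∫⁻ z, G z * w (z - t • η) :=
        lintegral_lintegral_swap ((hG.comp measurable_fst).mul (hw.comp hm)).aemeasurable
    _ = ∫⁻ t : ℝ, ∫⁻ z, G (z + t • η) * w z := by
        refine lintegral_congr fun t => ?_
        rw [← lintegral_add_right_eq_self (fun z => G z * w (z - t • η)) (t • η)]
        simp
    _ = ∫⁻ z, ∫⁻ t : ℝ, G (z + t • η) * w z :=
        (lintegral_lintegral_swap (f := fun z t => G (z + t • η) * w z)
          ((hG.comp hp).mul (hw.comp measurable_fst)).aemeasurable).symm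
    _ = ∫⁻ z, {z : En n | ⟪z, η⟫ ∈ Ico (0 : ℝ) 1}.indicator
          (fun z => ∫⁻ t : ℝ, G (base η z + t • η)) z := by
        refine lintegral_congr fun z => ?_
        have hshift : ∫⁻ t : ℝ, G (base η z + t • η) = ∫⁻ t : ℝ, G (z + t • η) := by
          simp only [base_add]
          exact lintegral_sub_right_eq_self (fun t : ℝ => G (z + t • η)) ⟪z, η⟫
        rw [lintegral_mul_const _
            (show Measurable fun t : ℝ => G (z + t • η) from hG.comp (by fun_prop)),
          ← hshift]
        by_cases hz : z ∈ {z : En n | ⟪z, η⟫ ∈ Ico (0 : ℝ) 1} <;> simp only [w, indicator, hz] <;>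
          simp
    _ = _ := lintegral_indicator hslab _

lemma ae_ae_line (η : En n) {P : En n → Prop} (hP : ∀ᵐ x, P x) :
    ∀ᵐ z : En n, ∀ᵐ t : ℝ, P (base η z + t • η) := by
  obtain ⟨N, hN, hNm, hN0⟩ := exists_measurable_superset_of_null hP
  have hp : Measurable fun p : En n × ℝ => p.1 + p.2 • η := by fun_prop
  have key : ∀ᵐ z : En n, ∀ᵐ t : ℝ, z + t • η ∉ N := by
    refine (Measure.ae_ae_comm (μ := (volume : Measure ℝ)) (ν := (volume : Measure (En n)))
      (p := fun t z => z + t • η ∉ N) ?_).1 ?_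
    · exact (hp.comp measurable_swap) hNm.compl
    · refine ae_of_all _ fun t => ?_
      have := (measurePreserving_add_right (volume : Measure (En n)) (t • η)).quasiMeasurePreserving
      exact this.ae (measure_eq_zero_iff_ae_notMem.1 hN0)
  filter_upwards [key] with z hz
  have h2 := (measurePreserving_sub_right (volume : Measure ℝ)
    ⟪z, η⟫).quasiMeasurePreserving.ae hz
  filter_upwards [h2] with t ht
  rw [base_add]
  by_contra hc
  exact ht (hN hc)

/-! ### Measurability of the symmetrization -/

lemma fiberMeasure_apply_line (g : En n → ℝ) (x η : En n)
    {B : Set (En n)} (hB : MeasurableSet B) :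
    fiberMeasure g x η {t | x + t • η ∈ B}
      = ∫⁻ t : ℝ, B.indicator (fun y => ENNReal.ofReal (g y)) (x + t • η) := by
  have hl : Measurable fun t : ℝ => x + t • η := by fun_prop
  have hB' : MeasurableSet {t : ℝ | x + t • η ∈ B} := hl hB
  rw [fiberMeasure, withDensity_apply _ hB', ← lintegral_indicator hB']
  rfl

lemma mem_ehrhardSymm_iff (f : En n → ℝ) (η : En n) (E : Set (En n)) (z : En n) :
    z ∈ ehrhardSymm f η E ↔
      ⟪z, η⟫ ∈ ehrhard1D (fiberMeasure f (base η z) η) 1 {t | base η z + t • η ∈ E} := Iff.rfl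

lemma ehrhardSymm_ae_eq {f g : En n → ℝ} (hfg : f =ᵐ[volume] g) {E E' : Set (En n)}
    (hEE : E =ᵐ[volume] E') (η : En n) :
    ehrhardSymm f η E =ᵐ[volume] ehrhardSymm g η E' := by
  filter_upwards [ae_ae_line η hfg, ae_ae_line η hEE.mem_iff] with z h1 h2
  have hν : fiberMeasure f (base η z) η = fiberMeasure g (base η z) η := by
    refine withDensity_congr_ae ?_
    filter_upwards [h1] with t ht
    rw [ht]
  have hA : fiberMeasure g (base η z) η {t | base η z + t • η ∈ E}
      = fiberMeasure g (base η z) η {t | base η z + t • η ∈ E'} :=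
    measure_congr ((withDensity_absolutelyContinuous _ _).ae_le (eventuallyEq_set.2 h2))
  apply propext
  change z ∈ ehrhardSymm f η E ↔ z ∈ ehrhardSymm g η E'
  rw [mem_ehrhardSymm_iff, mem_ehrhardSymm_iff, mem_ehrhard1D_iff, mem_ehrhard1D_iff, hν, hA]

lemma measurableSet_ehrhardSymm {g : En n → ℝ} (hg : Measurable g) {η : En n} (hη : ‖η‖ = 1)
    {E : Set (En n)} (hE : MeasurableSet E) : MeasurableSet (ehrhardSymm g η E) := by
  have hin : Measurable fun z : En n => ⟪z, η⟫ := by fun_prop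
  have hmeas : ∀ B : Set (En n), MeasurableSet B →
      Measurable fun z => fiberMeasure g (base η z) η {t | base η z + t • η ∈ B} := by
    intro B hB
    simp only [fiberMeasure_apply_line g _ _ hB]
    refine Measurable.lintegral_prod_right'
      (f := fun p : En n × ℝ => B.indicator (fun y => ENNReal.ofReal (g y))
        (base η p.1 + p.2 • η)) ?_
    refine (hg.ennreal_ofReal.indicator hB).comp ?_
    have := measurable_base η
    fun_prop
  have : ehrhardSymm g η E = ⋂ q : ℚ, ({z : En n | (q : ℝ) ≤ ⟪z, η⟫} ∪
      {z | fiberMeasure g (base η z) η {t | base η z + t • η ∈ {y : En n | (q : ℝ) ≤ ⟪y, η⟫}}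
        ≤ fiberMeasure g (base η z) η {t | base η z + t • η ∈ E}}) := by
    ext z
    rw [mem_ehrhardSymm_iff, mem_ehrhard1D_iff]
    simp only [mem_iInter, mem_union, mem_ofPred_eq, inner_base_add hη]
    refine forall_congr' fun q => ?_
    rw [imp_iff_not_or, not_lt]
    rfl
  rw [this]
  refine MeasurableSet.iInter fun q => ?_
  exact (hin measurableSet_Ici).union
    (measurableSet_le (hmeas _ (hin measurableSet_Ici)) (hmeas _ hE))

lemma isClosed_halfSpaceOf (f : En n → ℝ) (E : Set (En n)) (v : En n) :
    IsClosed (halfSpaceOf f E v) := by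
  simp only [halfSpaceOf, ofPred_forall]
  refine isClosed_iInter fun b => isClosed_iInter fun _ => ?_
  exact isClosed_le continuous_const (by fun_prop)

/-- The inequality for measurable data, with any measurable set `H` that meets the lines parallel
to `η` in upper sets in place of the half-space. -/
lemma ehrhardSymm_diff_le {g : En n → ℝ} (hg : Measurable g) (hgi : Integrable g volume)
    {η : En n} (hη : ‖η‖ = 1) {E H : Set (En n)} (hE : MeasurableSet E) (hH : MeasurableSet H)
    (hup : ∀ x, IsUpperSet {t : ℝ | x + t • η ∈ H}) :
    muM g (ehrhardSymm g η E \ H) ≤ muM g (E \ H) := by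
  have hS := measurableSet_ehrhardSymm hg hη hE
  have hform : ∀ B : Set (En n), MeasurableSet B → muM g B =
      ∫⁻ z in {z : En n | ⟪z, η⟫ ∈ Ico (0 : ℝ) 1},
        fiberMeasure g (base η z) η {t | base η z + t • η ∈ B} := by
    intro B hB
    rw [muM, withDensity_apply _ hB, ← lintegral_indicator hB,
      lintegral_eq_slab hη (hg.ennreal_ofReal.indicator hB)]
    simp only [fiberMeasure_apply_line g _ _ hB]
  have hfin : ∀ᵐ z ∂(volume.restrict {z : En n | ⟪z, η⟫ ∈ Ico (0 : ℝ) 1}),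
      fiberMeasure g (base η z) η {t | base η z + t • η ∈ (univ : Set (En n))} < ⊤ := by
    refine ae_lt_top' ?_ ?_
    · simp only [fiberMeasure_apply_line g _ _ MeasurableSet.univ]
      refine (Measurable.lintegral_prod_right'
        (f := fun p : En n × ℝ => univ.indicator (fun y => ENNReal.ofReal (g y))
          (base η p.1 + p.2 • η)) ?_).aemeasurable
      refine (hg.ennreal_ofReal.indicator MeasurableSet.univ).comp ?_
      have := measurable_base η
      fun_prop
    · rw [← hform _ MeasurableSet.univ, muM, withDensity_apply _ MeasurableSet.univ,
        Measure.restrict_univ]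
      exact hgi.lintegral_lt_top.ne
  rw [hform _ (hS.diff hH), hform _ (hE.diff hH)]
  refine lintegral_mono_ae ?_
  filter_upwards [hfin] with z hz
  have hna : NullSingletonClass (fiberMeasure g (base η z) η) := by unfold fiberMeasure; infer_instance
  have hset : {t : ℝ | base η z + t • η ∈ ehrhardSymm g η E \ H}
      = ehrhard1D (fiberMeasure g (base η z) η) 1 {t | base η z + t • η ∈ E}
        \ {t | base η z + t • η ∈ H} := by
    ext t
    simp only [mem_ofPred_eq, Set.mem_sdiff, mem_ehrhardSymm_iff, base_base_add hη, inner_base_add hη]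
  rw [hset]
  exact ehrhard1D_diff_le _ _ _ (hup _)
    ((measure_mono fun t _ => mem_univ (base η z + t • η)).trans_lt hz).ne

end lines

/-- Symmetrization in any direction `η` with `v·η > 0` does not move mass out of the
half-space `H_μ(E, v)`. -/
theorem mass_not_increasing {n : ℕ} (hn : 2 ≤ n) (f : En n → ℝ) (f' : En n → En n)
    (hW : MemW f f') (hPS : IsPSMeasure f f')
    (E : Set (En n)) (hE : NullMeasurableSet E volume)
    (v : En n) (hv : ‖v‖ = 1)
    (η : En n) (hη : ‖η‖ = 1) (hvη : (0:ℝ) < ⟪v, η⟫) :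
    muM f (ehrhardSymm f η E \ halfSpaceOf f E v) ≤ muM f (E \ halfSpaceOf f E v) := by
  obtain ⟨-, hint, -⟩ := hW
  obtain ⟨g, hgm, hfg⟩ := hint.aestronglyMeasurable.aemeasurable
  obtain ⟨E', hE'm, hEE'⟩ := hE
  have hmu : muM f = muM g := withDensity_congr_ae (hfg.fun_comp ENNReal.ofReal)
  have hac : muM g ≪ volume := withDensity_absolutelyContinuous _ _
  set H := halfSpaceOf f E v with hHdef
  have hup : ∀ x, IsUpperSet {t : ℝ | x + t • η ∈ H} := by
    intro x s t hst hs b hb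
    refine (hs b hb).trans ?_
    simp only [inner_add_left, real_inner_smul_left]
    rw [real_inner_comm] at hvη
    gcongr
  have hS : (ehrhardSymm f η E \ H : Set (En n)) =ᵐ[muM g] (ehrhardSymm g η E' \ H : Set (En n)) :=
    ae_eq_set_sdiff (hac.ae_eq (ehrhardSymm_ae_eq hfg hEE' η)) (ae_eq_refl H)
  have hD : (E \ H : Set (En n)) =ᵐ[muM g] (E' \ H : Set (En n)) :=
    ae_eq_set_sdiff (hac.ae_eq hEE') (ae_eq_refl H)
  rw [hmu, measure_congr hS, measure_congr hD]
  exact ehrhardSymm_diff_le hgm (hint.congr hfg) hη hE'm (isClosed_halfSpaceOf f E v).measurableSet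
    hup
end
end
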